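/- arXiv:0806.4139 — 2 statements merged into one kernel-verified Lean document; each statement's English description precedes it below -/
import Mathlib

section
/- Let r > 0 and let u be bounded and Δ_G-harmonic in B_r \ {0}, i.e. u ∈ C²(B_r \ {0}) with Δ_G u = 0 on B_r \ {0} and sup_{B_r \ {0}} |u| < ∞, where B_r is the Grushin ball of radius r centered at the origin. Then u extends to a Δ_G-harmonic function on B_r: there exists ũ ∈ C²(B_r) with Δ_G ũ = 0 on B_r and ũ = u on B_r \ {0}. -/
open MeasureTheory

/-- Partial derivative in `x`. -/
noncomputable def pX (u : ℝ × ℝ → ℝ) (p : ℝ × ℝ) : ℝ := deriv (fun x => u (x, p.2)) p.1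

/-- Partial derivative in `y`. -/
noncomputable def pY (u : ℝ × ℝ → ℝ) (p : ℝ × ℝ) : ℝ := deriv (fun y => u (p.1, y)) p.2

/-- Second partial derivative in `x`. -/
noncomputable def pXX (u : ℝ × ℝ → ℝ) (p : ℝ × ℝ) : ℝ :=
  deriv (deriv (fun x => u (x, p.2))) p.1

/-- Second partial derivative in `y`. -/
noncomputable def pYY (u : ℝ × ℝ → ℝ) (p : ℝ × ℝ) : ℝ :=
  deriv (deriv (fun y => u (p.1, y))) p.2

/-- The Grushin Laplacian `Δ_G u = ∂_xx u + x² ∂_yy u`. -/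
noncomputable def grushinLap (u : ℝ × ℝ → ℝ) (p : ℝ × ℝ) : ℝ := pXX u p + p.1 ^ 2 * pYY u p

/-- The Grushin norm `‖(x,y)‖ = (x⁴ + 4y²)^(1/4)`. -/
noncomputable def gNorm (p : ℝ × ℝ) : ℝ := (p.1 ^ 4 + 4 * p.2 ^ 2) ^ ((1 : ℝ) / 4)

/-- The Grushin ball of radius `R` centered at `c`. -/
def gBall (c : ℝ × ℝ) (R : ℝ) : Set (ℝ × ℝ) := {p | gNorm (p - c) < R}


/-- A function of two variables together with its candidate partial derivatives. -/
structure GJet where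
  v : ℝ → ℝ → ℝ
  vx : ℝ → ℝ → ℝ
  vy : ℝ → ℝ → ℝ
  vxx : ℝ → ℝ → ℝ
  vyy : ℝ → ℝ → ℝ

/-- Points of the rectangle away from the singular points `(0, s)`, `s ∈ S`. -/
def GGood (S : Finset ℝ) (a b x y : ℝ) : Prop := |x| < a ∧ |y| < b ∧ (x ≠ 0 ∨ y ∉ S)

structure GSol (S : Finset ℝ) (a b : ℝ) (j : GJet) : Prop where
  cont : ∀ x y, GGood S a b x y → ContinuousAt (fun p : ℝ × ℝ => j.v p.1 p.2) (x, y)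
  hx : ∀ x y, GGood S a b x y → HasDerivAt (fun t => j.v t y) (j.vx x y) x
  hy : ∀ x y, GGood S a b x y → HasDerivAt (fun t => j.v x t) (j.vy x y) y
  hxx : ∀ x y, GGood S a b x y → HasDerivAt (fun t => j.vx t y) (j.vxx x y) x
  hyy : ∀ x y, GGood S a b x y → HasDerivAt (fun t => j.vy x t) (j.vyy x y) y
  eqn : ∀ x y, GGood S a b x y → j.vxx x y + x ^ 2 * j.vyy x y = 0

lemma GGood.mono {S T : Finset ℝ} {a b a' b' x y : ℝ} (h : GGood T a' b' x y)
    (hS : S ⊆ T) (ha : a' ≤ a) (hb : b' ≤ b) : GGood S a b x y :=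
  ⟨h.1.trans_le ha, h.2.1.trans_le hb, h.2.2.imp id (fun h1 h2 => h1 (hS h2))⟩

lemma GGood.isOpen (S : Finset ℝ) (a b : ℝ) :
    IsOpen {p : ℝ × ℝ | GGood S a b p.1 p.2} := by
  have h1 : IsOpen {p : ℝ × ℝ | |p.1| < a} := isOpen_lt (by fun_prop) (by fun_prop)
  have h2 : IsOpen {p : ℝ × ℝ | |p.2| < b} := isOpen_lt (by fun_prop) (by fun_prop)
  have h3 : IsOpen {p : ℝ × ℝ | p.1 ≠ 0} := isOpen_ne_fun (by fun_prop) (by fun_prop)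
  have h4 : IsOpen {p : ℝ × ℝ | p.2 ∉ S} :=
    (S.finite_toSet.isClosed.isOpen_compl).preimage continuous_snd
  exact h1.inter (h2.inter (h3.union h4))

lemma GGood.ev_x {S : Finset ℝ} {a b x y : ℝ} (h : GGood S a b x y) :
    ∀ᶠ t in nhds x, GGood S a b t y := by
  have := (GGood.isOpen S a b).mem_nhds (show (x, y) ∈ _ from h)
  have hc : Continuous (fun t : ℝ => (t, y)) := by fun_prop
  exact hc.continuousAt.eventually this

lemma GGood.ev_y {S : Finset ℝ} {a b x y : ℝ} (h : GGood S a b x y) :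
    ∀ᶠ t in nhds y, GGood S a b x t := by
  have := (GGood.isOpen S a b).mem_nhds (show (x, y) ∈ _ from h)
  have hc : Continuous (fun t : ℝ => (x, t)) := by fun_prop
  exact hc.continuousAt.eventually this

lemma GSol.mono {S T : Finset ℝ} {a b a' b' : ℝ} {j : GJet} (h : GSol S a b j)
    (hS : S ⊆ T) (ha : a' ≤ a) (hb : b' ≤ b) : GSol T a' b' j where
  cont x y g := h.cont x y (g.mono hS ha hb)
  hx x y g := h.hx x y (g.mono hS ha hb)
  hy x y g := h.hy x y (g.mono hS ha hb)
  hxx x y g := h.hxx x y (g.mono hS ha hb)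
  hyy x y g := h.hyy x y (g.mono hS ha hb)
  eqn x y g := h.eqn x y (g.mono hS ha hb)

/-- Second derivative test (necessary condition). -/
lemma second_deriv_nonpos {f f' : ℝ → ℝ} {f'' t : ℝ}
    (h1 : ∀ᶠ s in nhds t, HasDerivAt f (f' s) s) (h2 : HasDerivAt f' f'' t)
    (hmax : ∀ᶠ s in nhds t, f s ≤ f t) : f'' ≤ 0 := by
  by_contra hpos
  push Not at hpos
  have hd : deriv f =ᶠ[nhds t] f' := h1.mono fun s hs => hs.deriv
  have hd2 : deriv (deriv f) t = f'' := by rw [hd.deriv_eq, h2.deriv]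
  have hmax' : IsLocalMax f t := hmax
  have hmin : IsLocalMin f t :=
    isLocalMin_of_deriv_deriv_pos (by rw [hd2]; exact hpos) hmax'.deriv_eq_zero
      h1.self_of_nhds.continuousAt
  have hconst : f =ᶠ[nhds t] fun _ => f t := by
    filter_upwards [hmax, hmin] with s hs hs' using le_antisymm hs hs'
  have : deriv (deriv f) t = 0 := by
    have := hconst.deriv
    rw [this.deriv_eq]
    simp
  linarith

/-- `x⁴ + 4y²`. -/
def gE (x y : ℝ) : ℝ := x ^ 4 + 4 * y ^ 2

lemma gE_nonneg (x y : ℝ) : 0 ≤ gE x y := by unfold gE; positivity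

lemma gE_pos {x y : ℝ} (h : x ≠ 0 ∨ y ≠ 0) : 0 < gE x y := by
  unfold gE
  rcases h with h | h <;> positivity

/-- Fundamental solutions centred at the points of `S`, summed. -/
noncomputable def gammaJet (S : Finset ℝ) : GJet where
  v x y := ∑ s ∈ S, (gE x (y - s)) ^ (-(1 : ℝ) / 4)
  vx x y := ∑ s ∈ S, -x ^ 3 * (gE x (y - s)) ^ (-(5 : ℝ) / 4)
  vy x y := ∑ s ∈ S, -2 * (y - s) * (gE x (y - s)) ^ (-(5 : ℝ) / 4)
  vxx x y := ∑ s ∈ S, (-3 * x ^ 2 * (gE x (y - s)) ^ (-(5 : ℝ) / 4)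
    + 5 * x ^ 6 * (gE x (y - s)) ^ (-(9 : ℝ) / 4))
  vyy x y := ∑ s ∈ S, (-2 * (gE x (y - s)) ^ (-(5 : ℝ) / 4)
    + 20 * (y - s) ^ 2 * (gE x (y - s)) ^ (-(9 : ℝ) / 4))

lemma gE_hx (x y : ℝ) : HasDerivAt (fun t => gE t y) (4 * x ^ 3) x := by
  unfold gE
  simpa using ((hasDerivAt_id x).pow 4).add_const (4 * y ^ 2)

lemma gE_hy (x y s : ℝ) : HasDerivAt (fun t => gE x (t - s)) (8 * (y - s)) y := by
  unfold gE
  have := ((((hasDerivAt_id y).sub_const s).pow 2).const_mul 4).const_add (x ^ 4)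
  refine HasDerivAt.congr_deriv this ?_
  norm_num; ring

lemma GGood.ne {S : Finset ℝ} {a b x y : ℝ} (h : GGood S a b x y) {s : ℝ} (hs : s ∈ S) :
    0 < gE x (y - s) := by
  apply gE_pos
  rcases h.2.2 with h | h
  · exact Or.inl h
  · right; intro h'; apply h
    have : y = s := by linarith
    rwa [this]

lemma gammaJet_sol (S : Finset ℝ) (a b : ℝ) : GSol S a b (gammaJet S) where
  cont x y g := by
    have : ∀ s ∈ S, ContinuousAt (fun p : ℝ × ℝ => (gE p.1 (p.2 - s)) ^ (-(1 : ℝ) / 4)) (x, y) := by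
      intro s hs
      apply ContinuousAt.rpow_const
      · unfold gE; fun_prop
      · left; exact (g.ne hs).ne'
    exact tendsto_finsetSum S this
  hx x y g := by
    refine HasDerivAt.fun_sum fun s hs => ?_
    have := (gE_hx x (y - s)).rpow_const (p := -(1 : ℝ) / 4) (Or.inl (g.ne hs).ne')
    refine HasDerivAt.congr_deriv this ?_
    rw [show -(1 : ℝ) / 4 - 1 = -(5 : ℝ) / 4 by norm_num]; ring
  hy x y g := by
    refine HasDerivAt.fun_sum fun s hs => ?_
    have := (gE_hy x y s).rpow_const (p := -(1 : ℝ) / 4) (Or.inl (g.ne hs).ne')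
    refine HasDerivAt.congr_deriv this ?_
    rw [show -(1 : ℝ) / 4 - 1 = -(5 : ℝ) / 4 by norm_num]; ring
  hxx x y g := by
    refine HasDerivAt.fun_sum fun s hs => ?_
    have := (gE_hx x (y - s)).rpow_const (p := -(5 : ℝ) / 4) (Or.inl (g.ne hs).ne')
    have := ((hasDerivAt_id x).pow 3).neg.mul this
    refine HasDerivAt.congr_deriv this ?_
    norm_num; ring
  hyy x y g := by
    refine HasDerivAt.fun_sum fun s hs => ?_
    have := (gE_hy x y s).rpow_const (p := -(5 : ℝ) / 4) (Or.inl (g.ne hs).ne')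
    have := (((hasDerivAt_id y).sub_const s).const_mul (-2)).mul this
    refine HasDerivAt.congr_deriv this ?_
    norm_num; ring
  eqn x y g := by
    simp only [gammaJet]
    rw [Finset.mul_sum, ← Finset.sum_add_distrib]
    refine Finset.sum_eq_zero fun s hs => ?_
    have hE := g.ne hs
    have : (gE x (y - s)) ^ (-(5 : ℝ) / 4) = gE x (y - s) * (gE x (y - s)) ^ (-(9 : ℝ) / 4) := by
      conv_rhs => rw [← Real.rpow_one_add' hE.le (by norm_num)]
      norm_num
    rw [this]
    unfold gE
    ring

lemma gammaJet_nonneg (S : Finset ℝ) (x y : ℝ) : 0 ≤ (gammaJet S).v x y :=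
  Finset.sum_nonneg fun _ _ => Real.rpow_nonneg (gE_nonneg _ _) _

lemma gammaJet_large (S : Finset ℝ) (N : ℝ) : ∃ τ > 0, ∀ s ∈ S, ∀ x y,
    0 < gE x (y - s) → gE x (y - s) ≤ τ → N ≤ (gammaJet S).v x y := by
  refine ⟨(|N| + 1) ^ (-4 : ℝ), by positivity, fun s hs x y h0 h => ?_⟩
  have h1 : (gE x (y - s)) ^ (-(1 : ℝ) / 4) ≤ (gammaJet S).v x y :=
    Finset.single_le_sum (f := fun s => (gE x (y - s)) ^ (-(1 : ℝ) / 4))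
      (fun _ _ => Real.rpow_nonneg (gE_nonneg _ _) _) hs
  have h2 : ((|N| + 1) ^ (-4 : ℝ)) ^ (-(1 : ℝ) / 4) ≤ (gE x (y - s)) ^ (-(1 : ℝ) / 4) :=
    Real.rpow_le_rpow_of_nonpos h0 h (by norm_num)
  rw [← Real.rpow_mul (by positivity)] at h2
  norm_num at h2
  have := le_abs_self N
  norm_num at h1
  linarith


/-- The barrier. -/
def gBar (a x0 p0 q0 A α K L δ x p q : ℝ) : ℝ :=
  A * (x ^ 4 - x0 ^ 4 - 4 * x0 ^ 3 * (x - x0)) + α * ((p - p0) ^ 2 + (q - q0) ^ 2)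
    + K * (p - q) - L * (p - q) ^ 2 + δ * (a ^ 2 - x ^ 2)

lemma quartic_nonneg (x x0 : ℝ) : 0 ≤ x ^ 4 - x0 ^ 4 - 4 * x0 ^ 3 * (x - x0) := by
  have : x ^ 4 - x0 ^ 4 - 4 * x0 ^ 3 * (x - x0) = (x - x0) ^ 2 * ((x + x0) ^ 2 + 2 * x0 ^ 2) := by
    ring
  rw [this]; positivity

lemma quartic_lower {a x x0 : ℝ} (ha : 0 < a) (hx : |x| = 3 * a / 4) (hx0 : |x0| ≤ a / 2) :
    a ^ 4 / 50 ≤ x ^ 4 - x0 ^ 4 - 4 * x0 ^ 3 * (x - x0) := by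
  have e : x ^ 4 - x0 ^ 4 - 4 * x0 ^ 3 * (x - x0) = (x - x0) ^ 2 * ((x + x0) ^ 2 + 2 * x0 ^ 2) := by
    ring
  have h1 : (a / 4) ≤ |x - x0| := by
    have := abs_sub_abs_le_abs_sub x x0
    linarith
  have h2 : (a / 4) ^ 2 ≤ (x - x0) ^ 2 := by
    rw [← sq_abs (x - x0)]; gcongr
  have h3 : x ^ 2 = (3 * a / 4) ^ 2 := by rw [← sq_abs x, hx]
  have h4 : (2 / 3) * (3 * a / 4) ^ 2 ≤ (x + x0) ^ 2 + 2 * x0 ^ 2 := by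
    rw [← h3]; nlinarith [sq_nonneg (x + 3 * x0)]
  rw [e]
  calc a ^ 4 / 50 ≤ (a / 4) ^ 2 * ((2 / 3) * (3 * a / 4) ^ 2) := by
        have : 0 < a ^ 4 := by positivity
        nlinarith
    _ ≤ _ := by gcongr

lemma gBar_hx (a x0 p0 q0 A α K L δ x p q : ℝ) :
    HasDerivAt (fun t => gBar a x0 p0 q0 A α K L δ t p q)
      (A * (4 * x ^ 3 - 4 * x0 ^ 3) - 2 * δ * x) x := by
  unfold gBar
  have h := (((((hasDerivAt_id x).pow 4).sub_const (x0 ^ 4)).sub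
    (((hasDerivAt_id x).sub_const x0).const_mul (4 * x0 ^ 3))).const_mul A)
  have h2 := ((((h.add_const (α * ((p - p0) ^ 2 + (q - q0) ^ 2))).add_const
    (K * (p - q))).sub_const (L * (p - q) ^ 2))).add
    ((((hasDerivAt_id x).pow 2).const_sub (a ^ 2)).const_mul δ)
  refine HasDerivAt.congr_deriv h2 ?_
  norm_num; ring

lemma gBar_hxx (x0 A δ x : ℝ) :
    HasDerivAt (fun t => A * (4 * t ^ 3 - 4 * x0 ^ 3) - 2 * δ * t)
      (A * (12 * x ^ 2) - 2 * δ) x := by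
  have h := ((((hasDerivAt_id x).pow 3).const_mul 4).sub_const (4 * x0 ^ 3)).const_mul A
  have h2 := h.sub ((hasDerivAt_id x).const_mul (2 * δ))
  refine HasDerivAt.congr_deriv h2 ?_
  change A * (4 * (((3 : ℕ) : ℝ) * x ^ 2 * 1)) - 2 * δ * 1 = _
  push_cast; ring

lemma gBar_hp (a x0 p0 q0 A α K L δ x p q : ℝ) :
    HasDerivAt (fun t => gBar a x0 p0 q0 A α K L δ x t q)
      (2 * α * (p - p0) + K - 2 * L * (p - q)) p := by
  unfold gBar
  have h1 := ((((hasDerivAt_id p).sub_const p0).pow 2).add_const ((q - q0) ^ 2)).const_mul α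
  have h2 := h1.const_add (A * (x ^ 4 - x0 ^ 4 - 4 * x0 ^ 3 * (x - x0)))
  have h3 := h2.add (((hasDerivAt_id p).sub_const q).const_mul K)
  have h4 := h3.sub ((((hasDerivAt_id p).sub_const q).pow 2).const_mul L)
  refine HasDerivAt.congr_deriv (h4.add_const (δ * (a ^ 2 - x ^ 2))) ?_
  norm_num; ring

lemma gBar_hpp (p0 α K L p q : ℝ) :
    HasDerivAt (fun t => 2 * α * (t - p0) + K - 2 * L * (t - q)) (2 * α - 2 * L) p := by
  have h := ((((hasDerivAt_id p).sub_const p0).const_mul (2 * α)).add_const K).sub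
    (((hasDerivAt_id p).sub_const q).const_mul (2 * L))
  refine HasDerivAt.congr_deriv h ?_
  norm_num

lemma gBar_hq (a x0 p0 q0 A α K L δ x p q : ℝ) :
    HasDerivAt (fun t => gBar a x0 p0 q0 A α K L δ x p t)
      (2 * α * (q - q0) - K + 2 * L * (p - q)) q := by
  unfold gBar
  have h1 := ((((hasDerivAt_id q).sub_const q0).pow 2).const_add ((p - p0) ^ 2)).const_mul α
  have h2 := h1.const_add (A * (x ^ 4 - x0 ^ 4 - 4 * x0 ^ 3 * (x - x0)))
  have h3 := h2.add (((hasDerivAt_id q).const_sub p).const_mul K)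
  have h4 := h3.sub ((((hasDerivAt_id q).const_sub p).pow 2).const_mul L)
  refine HasDerivAt.congr_deriv (h4.add_const (δ * (a ^ 2 - x ^ 2))) ?_
  norm_num; ring

lemma gBar_hqq (q0 α K L p q : ℝ) :
    HasDerivAt (fun t => 2 * α * (t - q0) - K + 2 * L * (p - t)) (2 * α - 2 * L) q := by
  have h := ((((hasDerivAt_id q).sub_const q0).const_mul (2 * α)).sub_const K).add
    (((hasDerivAt_id q).const_sub p).const_mul (2 * L))
  refine HasDerivAt.congr_deriv h ?_
  norm_num; ring

/-- No interior maximum. -/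
lemma no_interior_max {S : Finset ℝ} {a b : ℝ} {j g : GJet} (hj : GSol S a b j)
    (hg : GSol S a b g) {ε x0 p0 q0 A α K L δ x p q : ℝ} (hδ : 0 < δ) (hL : L = 3 * A + α)
    (h1 : GGood S a b x p) (h2 : GGood S a b x q)
    (hx : ∀ᶠ t in nhds x,
      j.v t p - j.v t q - ε * (g.v t p + g.v t q) - gBar a x0 p0 q0 A α K L δ t p q
      ≤ j.v x p - j.v x q - ε * (g.v x p + g.v x q) - gBar a x0 p0 q0 A α K L δ x p q)
    (hp : ∀ᶠ t in nhds p,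
      j.v x t - j.v x q - ε * (g.v x t + g.v x q) - gBar a x0 p0 q0 A α K L δ x t q
      ≤ j.v x p - j.v x q - ε * (g.v x p + g.v x q) - gBar a x0 p0 q0 A α K L δ x p q)
    (hq : ∀ᶠ t in nhds q,
      j.v x p - j.v x t - ε * (g.v x p + g.v x t) - gBar a x0 p0 q0 A α K L δ x p t
      ≤ j.v x p - j.v x q - ε * (g.v x p + g.v x q) - gBar a x0 p0 q0 A α K L δ x p q) :
    False := by
  have ex := second_deriv_nonpos (f' := fun t => j.vx t p - j.vx t q - ε * (g.vx t p + g.vx t q)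
      - (A * (4 * t ^ 3 - 4 * x0 ^ 3) - 2 * δ * t))
    (f'' := j.vxx x p - j.vxx x q - ε * (g.vxx x p + g.vxx x q) - (A * (12 * x ^ 2) - 2 * δ))
    (by
      filter_upwards [h1.ev_x, h2.ev_x] with t k1 k2
      exact ((((hj.hx _ _ k1).sub (hj.hx _ _ k2)).sub
        (((hg.hx _ _ k1).add (hg.hx _ _ k2)).const_mul ε)).sub (gBar_hx ..)))
    ((((hj.hxx _ _ h1).sub (hj.hxx _ _ h2)).sub
        (((hg.hxx _ _ h1).add (hg.hxx _ _ h2)).const_mul ε)).sub (gBar_hxx ..)) hx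
  have ep := second_deriv_nonpos (f' := fun t => j.vy x t - ε * (g.vy x t)
      - (2 * α * (t - p0) + K - 2 * L * (t - q)))
    (f'' := j.vyy x p - ε * (g.vyy x p) - (2 * α - 2 * L))
    (by
      filter_upwards [h1.ev_y] with t k1
      exact ((((hj.hy _ _ k1).sub_const _).sub
        (((hg.hy _ _ k1).add_const _).const_mul ε)).sub (gBar_hp ..)))
    ((((hj.hyy _ _ h1)).sub
        (((hg.hyy _ _ h1)).const_mul ε)).sub (gBar_hpp ..)) hp
  have eq := second_deriv_nonpos (f' := fun t => -j.vy x t - ε * (g.vy x t)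
      - (2 * α * (t - q0) - K + 2 * L * (p - t)))
    (f'' := - j.vyy x q - ε * (g.vyy x q) - (2 * α - 2 * L))
    (by
      filter_upwards [h2.ev_y] with t k1
      exact ((((hj.hy _ _ k1).const_sub _).sub
        (((hg.hy _ _ k1).const_add _).const_mul ε)).sub (gBar_hq ..)))
    ((((hj.hyy _ _ h2).neg).sub
        (((hg.hyy _ _ h2)).const_mul ε)).sub (gBar_hqq ..)) hq
  have e1 := hj.eqn _ _ h1
  have e2 := hj.eqn _ _ h2
  have e3 := hg.eqn _ _ h1
  have e4 := hg.eqn _ _ h2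
  have hx2 : 0 ≤ x ^ 2 := sq_nonneg x
  have m1 := mul_le_mul_of_nonneg_left ep hx2
  have m2 := mul_le_mul_of_nonneg_left eq hx2
  have key : (j.vxx x p - j.vxx x q - ε * (g.vxx x p + g.vxx x q) - (A * (12 * x ^ 2) - 2 * δ))
     + x ^ 2 * (j.vyy x p - ε * (g.vyy x p) - (2 * α - 2 * L))
     + x ^ 2 * (- j.vyy x q - ε * (g.vyy x q) - (2 * α - 2 * L)) = 2 * δ := by
    rw [hL]
    linear_combination e1 - e2 - ε * e3 - ε * e4
  linarith


/-- The `ε`-version of the comparison estimate. -/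
lemma lip_eps {S : Finset ℝ} {a b M : ℝ} {j : GJet} (ha : 0 < a) (hb : 0 < b)
    (hj : GSol S a b j) (hM : ∀ x y, GGood S a b x y → |j.v x y| ≤ M) (hM0 : 0 ≤ M)
    {x0 p0 q0 ε : ℝ} (hε : 0 < ε) (hx0 : |x0| ≤ a / 2) (hp0 : |p0| ≤ b / 2) (hq0 : |q0| ≤ b / 2)
    (hpq : q0 ≤ p0) (g1 : GGood S a b x0 p0) (g2 : GGood S a b x0 q0) :
    j.v x0 p0 - j.v x0 q0 ≤ (2 * b * (3 * (100 * M / a ^ 4) + 32 * M / b ^ 2)) * (p0 - q0)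
      + ε * a ^ 2 + ε * ((gammaJet S).v x0 p0 + (gammaJet S).v x0 q0) := by
  set g := gammaJet S with hgdef
  have hg : GSol S a b g := gammaJet_sol S a b
  set A := 100 * M / a ^ 4 with hA
  set α := 32 * M / b ^ 2 with hα
  set L := 3 * A + α with hL
  set K := 2 * b * L with hK
  have hA0 : 0 ≤ A := by positivity
  have hα0 : 0 ≤ α := by positivity
  have hL0 : 0 ≤ L := by positivity
  have hK0 : 0 ≤ K := by positivity
  have gn : ∀ x y, 0 ≤ g.v x y := gammaJet_nonneg S
  obtain ⟨τ, hτ, hlarge⟩ := gammaJet_large S (2 * M / ε)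
  have hlarge' : ∀ s ∈ S, ∀ x y, 0 < gE x (y - s) → gE x (y - s) ≤ τ → 2 * M ≤ ε * g.v x y := by
    intro s hs x y h0 h
    have := hlarge s hs x y h0 h
    rw [div_le_iff₀ hε] at this
    linarith
  have hM2 : ∀ x p q, GGood S a b x p → GGood S a b x q → j.v x p - j.v x q ≤ 2 * M := by
    intro x p q k1 k2
    have i1 := abs_le.1 (hM _ _ k1)
    have i2 := abs_le.1 (hM _ _ k2)
    linarith
  by_contra hcon
  push Not at hcon
  -- the comparison function
  set G : ℝ × ℝ × ℝ → ℝ := fun z => j.v z.1 z.2.1 - j.v z.1 z.2.2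
    - ε * (g.v z.1 z.2.1 + g.v z.1 z.2.2) - gBar a x0 p0 q0 A α K L ε z.1 z.2.1 z.2.2 with hG
  have hG0 : 0 < G (x0, p0, q0) := by
    simp only [hG, gBar]
    have : 0 ≤ L * (p0 - q0) ^ 2 := by positivity
    have : 0 ≤ ε * x0 ^ 2 := by positivity
    nlinarith
  -- the compact domain
  set D : Set (ℝ × ℝ × ℝ) := {z | |z.1| ≤ 3 * a / 4 ∧ |z.2.1| ≤ 3 * b / 4 ∧ |z.2.2| ≤ 3 * b / 4 ∧
    z.2.2 ≤ z.2.1 ∧ ∀ s ∈ S, τ ≤ gE z.1 (z.2.1 - s) ∧ τ ≤ gE z.1 (z.2.2 - s)} with hD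
  have good_of : ∀ x y, |x| ≤ 3 * a / 4 → |y| ≤ 3 * b / 4 → (∀ s ∈ S, τ ≤ gE x (y - s)) →
      GGood S a b x y := by
    intro x y hx hy h
    refine ⟨by linarith, by linarith, ?_⟩
    by_contra hne
    push Not at hne
    have := h y hne.2
    simp [gE, hne.1] at this
    linarith
  have hDg : ∀ z ∈ D, GGood S a b z.1 z.2.1 ∧ GGood S a b z.1 z.2.2 := fun z hz =>
    ⟨good_of _ _ hz.1 hz.2.1 fun s hs => (hz.2.2.2.2 s hs).1,
     good_of _ _ hz.1 hz.2.2.1 fun s hs => (hz.2.2.2.2 s hs).2⟩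
  have hDclosed : IsClosed D := by
    have c1 : IsClosed {z : ℝ × ℝ × ℝ | |z.1| ≤ 3 * a / 4} :=
      isClosed_le (by fun_prop) (by fun_prop)
    have c2 : IsClosed {z : ℝ × ℝ × ℝ | |z.2.1| ≤ 3 * b / 4} :=
      isClosed_le (by fun_prop) (by fun_prop)
    have c3 : IsClosed {z : ℝ × ℝ × ℝ | |z.2.2| ≤ 3 * b / 4} :=
      isClosed_le (by fun_prop) (by fun_prop)
    have c4 : IsClosed {z : ℝ × ℝ × ℝ | z.2.2 ≤ z.2.1} :=
      isClosed_le (by fun_prop) (by fun_prop)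
    have c5 : IsClosed {z : ℝ × ℝ × ℝ | ∀ s ∈ S, τ ≤ gE z.1 (z.2.1 - s) ∧ τ ≤ gE z.1 (z.2.2 - s)} := by
      simp only [Set.ofPred_forall]
      refine isClosed_biInter fun s _ => ?_
      have d1 : IsClosed {z : ℝ × ℝ × ℝ | τ ≤ gE z.1 (z.2.1 - s)} :=
        isClosed_le (by fun_prop) (by unfold gE; fun_prop)
      have d2 : IsClosed {z : ℝ × ℝ × ℝ | τ ≤ gE z.1 (z.2.2 - s)} :=
        isClosed_le (by fun_prop) (by unfold gE; fun_prop)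
      exact d1.inter d2
    exact c1.inter (c2.inter (c3.inter (c4.inter c5)))
  have hDcomp : IsCompact D := by
    refine IsCompact.of_isClosed_subset (isCompact_Icc (a := ((-(3 * a / 4), -(3 * b / 4), -(3 * b / 4)) : ℝ × ℝ × ℝ))
      (b := (3 * a / 4, 3 * b / 4, 3 * b / 4))) hDclosed ?_
    rintro ⟨x, p, q⟩ ⟨h1, h2, h3, -⟩
    have := abs_le.1 h1
    have := abs_le.1 h2
    have := abs_le.1 h3
    simp only [Set.mem_Icc, Prod.mk_le_mk]
    grind
  have hGcont : ContinuousOn G D := by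
    intro z hz
    apply ContinuousAt.continuousWithinAt
    obtain ⟨k1, k2⟩ := hDg z hz
    have t1 : ContinuousAt (fun z : ℝ × ℝ × ℝ => (z.1, z.2.1)) z := by fun_prop
    have t2 : ContinuousAt (fun z : ℝ × ℝ × ℝ => (z.1, z.2.2)) z := by fun_prop
    have j1 : ContinuousAt (fun z : ℝ × ℝ × ℝ => j.v z.1 z.2.1) z :=
      ContinuousAt.comp (f := fun z : ℝ × ℝ × ℝ => (z.1, z.2.1)) (hj.cont _ _ k1) t1
    have j2 : ContinuousAt (fun z : ℝ × ℝ × ℝ => j.v z.1 z.2.2) z :=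
      ContinuousAt.comp (f := fun z : ℝ × ℝ × ℝ => (z.1, z.2.2)) (hj.cont _ _ k2) t2
    have j3 : ContinuousAt (fun z : ℝ × ℝ × ℝ => g.v z.1 z.2.1) z :=
      ContinuousAt.comp (f := fun z : ℝ × ℝ × ℝ => (z.1, z.2.1)) (hg.cont _ _ k1) t1
    have j4 : ContinuousAt (fun z : ℝ × ℝ × ℝ => g.v z.1 z.2.2) z :=
      ContinuousAt.comp (f := fun z : ℝ × ℝ × ℝ => (z.1, z.2.2)) (hg.cont _ _ k2) t2
    have j5 : ContinuousAt (fun z : ℝ × ℝ × ℝ => gBar a x0 p0 q0 A α K L ε z.1 z.2.1 z.2.2) z := by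
      unfold gBar; fun_prop
    exact ((j1.sub j2).sub ((j3.add j4).const_mul ε)).sub j5
  -- lower bounds of the barrier
  have sqx : ∀ x, |x| ≤ 3 * a / 4 → 0 ≤ ε * (a ^ 2 - x ^ 2) := by
    intro x hx
    have : x ^ 2 ≤ a ^ 2 := sq_le_sq' (by linarith [(abs_le.1 hx).1]) (by linarith [(abs_le.1 hx).2])
    exact mul_nonneg hε.le (by linarith)
  have lin0 : ∀ p q, |p| ≤ 3 * b / 4 → |q| ≤ 3 * b / 4 → q ≤ p →
      0 ≤ K * (p - q) - L * (p - q) ^ 2 := by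
    intro p q hp hq h
    have e : K * (p - q) - L * (p - q) ^ 2 = L * ((p - q) * (2 * b - (p - q))) := by
      rw [hK]; ring
    rw [e]
    have := abs_le.1 hp
    have := abs_le.1 hq
    exact mul_nonneg hL0 (mul_nonneg (by linarith) (by linarith))
  have hAq : A * (a ^ 4 / 50) = 2 * M := by rw [hA]; field_simp; ring
  have hαq : α * (b / 4) ^ 2 = 2 * M := by rw [hα]; field_simp; ring
  have sqp : ∀ p p0, |p| = 3 * b / 4 → |p0| ≤ b / 2 → 2 * M ≤ α * (p - p0) ^ 2 := by
    intro p p0 hp hp0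
    have h1 : b / 4 ≤ |p - p0| := by
      have := abs_sub_abs_le_abs_sub p p0
      linarith
    rw [← hαq, ← sq_abs (p - p0)]
    gcongr
  have hcD : (x0, p0, q0) ∈ D := by
    refine ⟨by simp only; linarith, by simp only; linarith, by simp only; linarith, hpq, ?_⟩
    intro s hs
    have n1 := g1.ne hs
    have n2 := g2.ne hs
    have hm := hM2 _ _ _ g1 g2
    have f0 : 0 ≤ K * (p0 - q0) := mul_nonneg hK0 (by linarith)
    have f1 : 0 ≤ ε * a ^ 2 := by positivity
    have f2 := mul_nonneg hε.le (gn x0 p0)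
    have f3 := mul_nonneg hε.le (gn x0 q0)
    constructor
    · by_contra hlt
      push Not at hlt
      have := hlarge' s hs _ _ n1 hlt.le
      linarith
    · by_contra hlt
      push Not at hlt
      have := hlarge' s hs _ _ n2 hlt.le
      linarith
  obtain ⟨z, hzD, hzmax⟩ := hDcomp.exists_isMaxOn (f := G) ⟨_, hcD⟩ hGcont
  have hzpos : 0 < G z := hG0.trans_le (hzmax hcD)
  obtain ⟨x, p, q⟩ := z
  obtain ⟨k1, k2⟩ := hDg _ hzD
  obtain ⟨hx, hp, hq, hqp, hs⟩ := hzD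
  simp only at k1 k2 hx hp hq hqp hs
  have hm := hM2 _ _ _ k1 k2
  have b1 := mul_nonneg hA0 (quartic_nonneg x x0)
  have b2 := mul_nonneg hα0 (sq_nonneg (p - p0))
  have b3 := mul_nonneg hα0 (sq_nonneg (q - q0))
  have b4 := lin0 p q hp hq hqp
  have b5 := sqx x hx
  have b6 := mul_nonneg hε.le (gn x p)
  have b7 := mul_nonneg hε.le (gn x q)
  have hzpos' : 0 < j.v x p - j.v x q - ε * (g.v x p + g.v x q)
      - gBar a x0 p0 q0 A α K L ε x p q := hzpos
  unfold gBar at hzpos'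
  have sx : |x| < 3 * a / 4 := by
    refine lt_of_le_of_ne hx fun h => ?_
    have := mul_le_mul_of_nonneg_left (quartic_lower ha h hx0) hA0
    linarith
  have sp : |p| < 3 * b / 4 := by
    refine lt_of_le_of_ne hp fun h => ?_
    have := sqp p p0 h hp0
    linarith
  have sq : |q| < 3 * b / 4 := by
    refine lt_of_le_of_ne hq fun h => ?_
    have := sqp q q0 h hq0
    linarith
  have spq : q < p := by
    refine lt_of_le_of_ne hqp fun h => ?_
    subst h
    linarith
  have ss : ∀ s ∈ S, τ < gE x (p - s) ∧ τ < gE x (q - s) := by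
    intro s hsS
    constructor
    · by_contra hlt
      push Not at hlt
      have := hlarge' s hsS _ _ (k1.ne hsS) hlt
      linarith
    · by_contra hlt
      push Not at hlt
      have := hlarge' s hsS _ _ (k2.ne hsS) hlt
      linarith
  have hDn : ∀ᶠ z in nhds ((x, p, q) : ℝ × ℝ × ℝ), z ∈ D := by
    have c1 : ∀ᶠ z in nhds ((x, p, q) : ℝ × ℝ × ℝ), |z.1| < 3 * a / 4 :=
      (isOpen_lt (by fun_prop) (by fun_prop)).mem_nhds sx
    have c2 : ∀ᶠ z in nhds ((x, p, q) : ℝ × ℝ × ℝ), |z.2.1| < 3 * b / 4 :=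
      (isOpen_lt (by fun_prop) (by fun_prop)).mem_nhds sp
    have c3 : ∀ᶠ z in nhds ((x, p, q) : ℝ × ℝ × ℝ), |z.2.2| < 3 * b / 4 :=
      (isOpen_lt (by fun_prop) (by fun_prop)).mem_nhds sq
    have c4 : ∀ᶠ z in nhds ((x, p, q) : ℝ × ℝ × ℝ), z.2.2 < z.2.1 :=
      (isOpen_lt (by fun_prop) (by fun_prop)).mem_nhds spq
    have c5 : ∀ᶠ z in nhds ((x, p, q) : ℝ × ℝ × ℝ),
        ∀ s ∈ S, τ < gE z.1 (z.2.1 - s) ∧ τ < gE z.1 (z.2.2 - s) := by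
      rw [Filter.eventually_all_finset]
      intro s hsS
      have d1 : ∀ᶠ z in nhds ((x, p, q) : ℝ × ℝ × ℝ), τ < gE z.1 (z.2.1 - s) :=
        (isOpen_lt (by fun_prop) (by unfold gE; fun_prop)).mem_nhds (ss s hsS).1
      have d2 : ∀ᶠ z in nhds ((x, p, q) : ℝ × ℝ × ℝ), τ < gE z.1 (z.2.2 - s) :=
        (isOpen_lt (by fun_prop) (by unfold gE; fun_prop)).mem_nhds (ss s hsS).2
      exact d1.and d2
    filter_upwards [c1, c2, c3, c4, c5] with z i1 i2 i3 i4 i5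
    exact ⟨i1.le, i2.le, i3.le, i4.le, fun s hs => ⟨(i5 s hs).1.le, (i5 s hs).2.le⟩⟩
  have hmax : ∀ᶠ z in nhds ((x, p, q) : ℝ × ℝ × ℝ), G z ≤ G (x, p, q) :=
    hDn.mono fun z hz => hzmax hz
  have cx : Continuous (fun t : ℝ => ((t, p, q) : ℝ × ℝ × ℝ)) := by fun_prop
  have cp : Continuous (fun t : ℝ => ((x, t, q) : ℝ × ℝ × ℝ)) := by fun_prop
  have cq : Continuous (fun t : ℝ => ((x, p, t) : ℝ × ℝ × ℝ)) := by fun_prop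
  exact no_interior_max hj hg hε hL k1 k2 ((cx.tendsto x).eventually hmax)
    ((cp.tendsto p).eventually hmax) ((cq.tendsto q).eventually hmax)

/-- The Lipschitz constant in `y`. -/
noncomputable def cLip (a b : ℝ) : ℝ := 2 * b * (300 / a ^ 4 + 32 / b ^ 2)

lemma cLip_nonneg {a b : ℝ} (hb : 0 < b) : 0 ≤ cLip a b := by
  unfold cLip; positivity

lemma lip_one {S : Finset ℝ} {a b M : ℝ} {j : GJet} (ha : 0 < a) (hb : 0 < b)
    (hj : GSol S a b j) (hM : ∀ x y, GGood S a b x y → |j.v x y| ≤ M) (hM0 : 0 ≤ M)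
    {x0 p0 q0 : ℝ} (hx0 : |x0| ≤ a / 2) (hp0 : |p0| ≤ b / 2) (hq0 : |q0| ≤ b / 2)
    (hpq : q0 ≤ p0) (g1 : GGood S a b x0 p0) (g2 : GGood S a b x0 q0) :
    j.v x0 p0 - j.v x0 q0 ≤ cLip a b * M * (p0 - q0) := by
  have h : ∀ ε : ℝ, 0 < ε → j.v x0 p0 - j.v x0 q0 ≤ cLip a b * M * (p0 - q0)
      + ε * (a ^ 2 + ((gammaJet S).v x0 p0 + (gammaJet S).v x0 q0)) := by
    intro ε hε
    have := lip_eps ha hb hj hM hM0 hε hx0 hp0 hq0 hpq g1 g2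
    have e : 2 * b * (3 * (100 * M / a ^ 4) + 32 * M / b ^ 2) = cLip a b * M := by
      unfold cLip; ring
    rw [e] at this
    linarith
  set W := (a ^ 2 + ((gammaJet S).v x0 p0 + (gammaJet S).v x0 q0)) with hW
  have hW0 : 0 ≤ W := by
    have := gammaJet_nonneg S x0 p0
    have := gammaJet_nonneg S x0 q0
    positivity
  apply le_of_forall_pos_le_add
  intro η hη
  have := h (η / (W + 1)) (by positivity)
  have h2 : η / (W + 1) * W ≤ η := by
    rw [div_mul_eq_mul_div, div_le_iff₀ (by positivity)]
    nlinarith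
  linarith

def GJet.neg (j : GJet) : GJet where
  v x y := -j.v x y
  vx x y := -j.vx x y
  vy x y := -j.vy x y
  vxx x y := -j.vxx x y
  vyy x y := -j.vyy x y

lemma GSol.neg {S : Finset ℝ} {a b : ℝ} {j : GJet} (h : GSol S a b j) : GSol S a b j.neg where
  cont x y g := (h.cont x y g).neg
  hx x y g := (h.hx x y g).neg
  hy x y g := (h.hy x y g).neg
  hxx x y g := (h.hxx x y g).neg
  hyy x y g := (h.hyy x y g).neg
  eqn x y g := by
    have := h.eqn x y g
    simp only [GJet.neg]; linarith

lemma lip_two {S : Finset ℝ} {a b M : ℝ} {j : GJet} (ha : 0 < a) (hb : 0 < b)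
    (hj : GSol S a b j) (hM : ∀ x y, GGood S a b x y → |j.v x y| ≤ M) (hM0 : 0 ≤ M)
    {x p q : ℝ} (hx : |x| ≤ a / 2) (hp : |p| ≤ b / 2) (hq : |q| ≤ b / 2)
    (g1 : GGood S a b x p) (g2 : GGood S a b x q) :
    |j.v x p - j.v x q| ≤ cLip a b * M * |p - q| := by
  have hMn : ∀ x y, GGood S a b x y → |j.neg.v x y| ≤ M := by
    intro x y g
    simpa [GJet.neg] using hM x y g
  rcases le_total q p with h | h
  · have i1 := lip_one ha hb hj hM hM0 hx hp hq h g1 g2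
    have i2 := lip_one ha hb hj.neg hMn hM0 hx hp hq h g1 g2
    simp only [GJet.neg] at i2
    rw [abs_of_nonneg (sub_nonneg.2 h), abs_le]
    constructor <;> linarith
  · have i1 := lip_one ha hb hj hM hM0 hx hq hp h g2 g1
    have i2 := lip_one ha hb hj.neg hMn hM0 hx hq hp h g2 g1
    simp only [GJet.neg] at i2
    rw [abs_of_nonpos (sub_nonpos.2 h), abs_le]
    constructor <;> linarith


/-- Difference quotient in `y`. -/
noncomputable def GJet.diff (h : ℝ) (j : GJet) : GJet where
  v x y := (j.v x (y + h) - j.v x y) / h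
  vx x y := (j.vx x (y + h) - j.vx x y) / h
  vy x y := (j.vy x (y + h) - j.vy x y) / h
  vxx x y := (j.vxx x (y + h) - j.vxx x y) / h
  vyy x y := (j.vyy x (y + h) - j.vyy x y) / h

/-- Singular set of a difference quotient. -/
noncomputable def sDiff (h : ℝ) (S : Finset ℝ) : Finset ℝ := S ∪ S.image (fun s => s - h)

lemma mem_sDiff {h : ℝ} {S : Finset ℝ} {y : ℝ} : y ∈ sDiff h S ↔ y ∈ S ∨ y + h ∈ S := by
  simp only [sDiff, Finset.mem_union, Finset.mem_image]
  refine or_congr Iff.rfl ⟨?_, fun hy => ⟨_, hy, by ring⟩⟩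
  rintro ⟨s, hs, rfl⟩
  simpa using hs

lemma GGood.sDiff_iff {S : Finset ℝ} {h a b x y : ℝ} :
    GGood (sDiff h S) a b x y ↔ (|x| < a ∧ |y| < b ∧ (x ≠ 0 ∨ (y ∉ S ∧ y + h ∉ S))) := by
  simp only [GGood, mem_sDiff]; tauto

lemma GGood.left {S : Finset ℝ} {h a b b' x y : ℝ} (g : GGood (sDiff h S) a b' x y)
    (hb : b' + |h| ≤ b) : GGood S a b x y := by
  rw [GGood.sDiff_iff] at g
  have := abs_nonneg h
  exact ⟨g.1, by linarith [g.2.1], g.2.2.imp id (fun k => k.1)⟩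

lemma GGood.right {S : Finset ℝ} {h a b b' x y : ℝ} (g : GGood (sDiff h S) a b' x y)
    (hb : b' + |h| ≤ b) : GGood S a b x (y + h) := by
  rw [GGood.sDiff_iff] at g
  have := abs_add_le y h
  exact ⟨g.1, by linarith [g.2.1], g.2.2.imp id (fun k => k.2)⟩

lemma GSol.diff {S : Finset ℝ} {a b b' : ℝ} {j : GJet} (hj : GSol S a b j) (h : ℝ)
    (hb : b' + |h| ≤ b) : GSol (sDiff h S) a b' (j.diff h) where
  cont x y g := by
    have t1 : ContinuousAt (fun z : ℝ × ℝ => (z.1, z.2 + h)) (x, y) := by fun_prop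
    have j1 : ContinuousAt (fun z : ℝ × ℝ => j.v z.1 (z.2 + h)) (x, y) :=
      ContinuousAt.comp (f := fun z : ℝ × ℝ => (z.1, z.2 + h)) (hj.cont _ _ (g.right hb)) t1
    exact (j1.sub (hj.cont _ _ (g.left hb))).div_const h
  hx x y g := ((hj.hx _ _ (g.right hb)).sub (hj.hx _ _ (g.left hb))).div_const h
  hy x y g := (((hj.hy _ _ (g.right hb)).comp_add_const y h).sub (hj.hy _ _ (g.left hb))).div_const h
  hxx x y g := ((hj.hxx _ _ (g.right hb)).sub (hj.hxx _ _ (g.left hb))).div_const h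
  hyy x y g :=
    (((hj.hyy _ _ (g.right hb)).comp_add_const y h).sub (hj.hyy _ _ (g.left hb))).div_const h
  eqn x y g := by
    have e1 := hj.eqn _ _ (g.right hb)
    have e2 := hj.eqn _ _ (g.left hb)
    simp only [GJet.diff]
    linear_combination (e1 - e2) / h

lemma diff_bound {S : Finset ℝ} {a b M : ℝ} {j : GJet} (ha : 0 < a) (hb : 0 < b)
    (hj : GSol S a b j) (hM : ∀ x y, GGood S a b x y → |j.v x y| ≤ M) (hM0 : 0 ≤ M)
    {h : ℝ} (h0 : h ≠ 0) (hh : |h| ≤ b / 4) :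
    ∀ x y, GGood (sDiff h S) (a / 2) (b / 4) x y → |(j.diff h).v x y| ≤ cLip a b * M := by
  intro x y g
  have gl : GGood S (a / 2) (b / 2) x y := g.left (by linarith)
  have gr : GGood S (a / 2) (b / 2) x (y + h) := g.right (by linarith)
  have := lip_two ha hb hj hM hM0 gl.1.le gr.2.1.le gl.2.1.le
    (gr.mono subset_rfl (by linarith) (by linarith)) (gl.mono subset_rfl (by linarith) (by linarith))
  simp only [GJet.diff]
  rw [abs_div, div_le_iff₀ (by positivity)]
  simpa using this

lemma diff_tendsto {f : ℝ → ℝ} {f' y : ℝ} (h : HasDerivAt f f' y) :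
    Filter.Tendsto (fun t => (f (y + t) - f y) / t) (nhdsWithin 0 {0}ᶜ) (nhds f') := by
  have := hasDerivAt_iff_tendsto_slope_zero.1 h
  refine this.congr fun t => ?_
  simp [div_eq_inv_mul]

lemma GGood.ev_sDiff {S : Finset ℝ} {a b x y : ℝ} (g : GGood S a b x y) :
    ∀ᶠ h in nhdsWithin (0 : ℝ) {0}ᶜ, GGood (sDiff h S) a b x y := by
  have hc : Filter.Tendsto (fun t : ℝ => y + t) (nhds 0) (nhds y) := by
    have : Continuous (fun t : ℝ => y + t) := by fun_prop
    simpa using this.tendsto 0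
  have := (hc.eventually g.ev_y).filter_mono (nhdsWithin_le_nhds (s := {0}ᶜ))
  filter_upwards [this] with h hh
  rw [GGood.sDiff_iff]
  refine ⟨g.1, g.2.1, ?_⟩
  rcases g.2.2 with k | k
  · exact Or.inl k
  · exact hh.2.2.imp id (fun k' => ⟨k, k'⟩)

lemma ev_small {η : ℝ} (hη : 0 < η) :
    ∀ᶠ h in nhdsWithin (0 : ℝ) {0}ᶜ, h ≠ 0 ∧ |h| ≤ η := by
  have h1 : ∀ᶠ h in nhdsWithin (0 : ℝ) {0}ᶜ, h ≠ 0 := eventually_mem_nhdsWithin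
  have h2 : ∀ᶠ h in nhds (0 : ℝ), |h| < η :=
    (isOpen_lt (by fun_prop) (by fun_prop)).mem_nhds (by simpa using hη)
  filter_upwards [h1, h2.filter_mono nhdsWithin_le_nhds] with h k1 k2 using ⟨k1, k2.le⟩

/-- Constant for the second derivative in `y`. -/
noncomputable def cYY (a b : ℝ) : ℝ := cLip (a / 2) (b / 4) * cLip a b

lemma cYY_nonneg {a b : ℝ} (hb : 0 < b) : 0 ≤ cYY a b :=
  mul_nonneg (cLip_nonneg (by linarith)) (cLip_nonneg hb)

lemma vy_lip {S : Finset ℝ} {a b M : ℝ} {j : GJet} (ha : 0 < a) (hb : 0 < b)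
    (hj : GSol S a b j) (hM : ∀ x y, GGood S a b x y → |j.v x y| ≤ M) (hM0 : 0 ≤ M)
    {x p q : ℝ} (g1 : GGood S (a / 4) (b / 8) x p) (g2 : GGood S (a / 4) (b / 8) x q) :
    |j.vy x p - j.vy x q| ≤ cYY a b * M * |p - q| := by
  have t1 := diff_tendsto (hj.hy x p (g1.mono subset_rfl (by linarith) (by linarith)))
  have t2 := diff_tendsto (hj.hy x q (g2.mono subset_rfl (by linarith) (by linarith)))
  refine le_of_tendsto (t1.sub t2).abs ?_
  filter_upwards [ev_small (show 0 < b / 4 by positivity), g1.ev_sDiff, g2.ev_sDiff]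
    with h ⟨h0, hh⟩ k1 k2
  have hs : GSol (sDiff h S) (a / 2) (b / 4) (j.diff h) :=
    (hj.diff h (b' := b / 4) (by linarith)).mono subset_rfl (by linarith) le_rfl
  have := lip_two (by positivity) (by positivity) hs (diff_bound ha hb hj hM hM0 h0 hh)
    (mul_nonneg (cLip_nonneg hb) hM0) (x := x) (p := p) (q := q)
    (by linarith [k1.1]) (by linarith [k1.2.1]) (by linarith [k2.2.1])
    (k1.mono subset_rfl (by linarith) (by linarith)) (k2.mono subset_rfl (by linarith) (by linarith))
  rw [← mul_assoc] at this
  exact this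

lemma vyy_bound {S : Finset ℝ} {a b M : ℝ} {j : GJet} (ha : 0 < a) (hb : 0 < b)
    (hj : GSol S a b j) (hM : ∀ x y, GGood S a b x y → |j.v x y| ≤ M) (hM0 : 0 ≤ M)
    {x y : ℝ} (g : GGood S (a / 4) (b / 8) x y) : |j.vyy x y| ≤ cYY a b * M := by
  refine (hj.hyy x y (g.mono subset_rfl (by linarith) (by linarith))).le_of_lip'
    (mul_nonneg (cYY_nonneg hb) hM0) ?_
  filter_upwards [g.ev_y] with t ht
  exact vy_lip ha hb hj hM hM0 ht g

lemma vxx_bound {S : Finset ℝ} {a b M : ℝ} {j : GJet} (ha : 0 < a) (hb : 0 < b)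
    (hj : GSol S a b j) (hM : ∀ x y, GGood S a b x y → |j.v x y| ≤ M) (hM0 : 0 ≤ M)
    {x y : ℝ} (g : GGood S (a / 4) (b / 8) x y) :
    |j.vxx x y| ≤ (a / 4) ^ 2 * (cYY a b * M) := by
  have h1 := vyy_bound ha hb hj hM hM0 g
  have h2 := hj.eqn x y (g.mono subset_rfl (by linarith) (by linarith))
  have h3 : j.vxx x y = -(x ^ 2 * j.vyy x y) := by linarith
  rw [h3, abs_neg, abs_mul, abs_of_nonneg (sq_nonneg x), ← sq_abs x]
  have := g.1.le
  gcongr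

lemma deriv_bound_of_second {f f' f'' : ℝ → ℝ} {A M N : ℝ} (hA : 0 < A)
    (h1 : ∀ t, |t| < A → HasDerivAt f (f' t) t) (h2 : ∀ t, |t| < A → HasDerivAt f' (f'' t) t)
    (hM : ∀ t, |t| < A → |f t| ≤ M) (hN : ∀ t, |t| < A → |f'' t| ≤ N)
    {x : ℝ} (hx : |x| < A / 2) : |f' x| ≤ 8 * M / A + N * (A / 4) := by
  have hx' := abs_lt.1 hx
  have hin : ∀ t ∈ Set.Icc x (x + A / 4), |t| < A := by
    intro t ht
    rw [abs_lt]
    constructor <;> linarith [ht.1, ht.2]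
  obtain ⟨ξ, hξ, e⟩ := exists_hasDerivAt_eq_slope f f' (show x < x + A / 4 by linarith)
    (fun t ht => (h1 t (hin t ht)).continuousAt.continuousWithinAt)
    (fun t ht => h1 t (hin t ⟨ht.1.le, ht.2.le⟩))
  have hxm : x ∈ Set.Icc x (x + A / 4) := ⟨le_rfl, by linarith⟩
  have hxm' : x + A / 4 ∈ Set.Icc x (x + A / 4) := ⟨by linarith, le_rfl⟩
  have hξm : ξ ∈ Set.Icc x (x + A / 4) := ⟨hξ.1.le, hξ.2.le⟩
  have b1 : |f' ξ| ≤ 8 * M / A := by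
    have i1 := abs_le.1 (hM _ (hin _ hxm))
    have i2 := abs_le.1 (hM _ (hin _ hxm'))
    have : |f (x + A / 4) - f x| ≤ 2 * M := by
      rw [abs_le]; constructor <;> linarith
    rw [e, abs_div, show x + A / 4 - x = A / 4 by ring, abs_of_pos (show 0 < A / 4 by positivity),
      div_le_iff₀ (by positivity)]
    calc _ ≤ 2 * M := this
      _ = 8 * M / A * (A / 4) := by field_simp; ring
  have b2 : ‖f' ξ - f' x‖ ≤ N * ‖ξ - x‖ :=
    (convex_Icc x (x + A / 4)).norm_image_sub_le_of_norm_hasDerivWithin_le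
      (fun t ht => (h2 t (hin t ht)).hasDerivWithinAt) (fun t ht => hN t (hin t ht)) hxm hξm
  have hN0 : 0 ≤ N := (abs_nonneg _).trans (hN x (hin x hxm))
  have b3 : ‖ξ - x‖ ≤ A / 4 := by
    rw [Real.norm_eq_abs, abs_le]; constructor <;> linarith [hξ.1, hξ.2]
  have b4 : N * ‖ξ - x‖ ≤ N * (A / 4) := by gcongr
  rw [Real.norm_eq_abs] at b2
  have c1 := abs_le.1 b1
  have c2 := abs_le.1 (b2.trans b4)
  rw [abs_le]; constructor <;> linarith

/-- Constant for the first derivative in `x`. -/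
noncomputable def cX (a b : ℝ) : ℝ := 8 / (a / 4) + (a / 4) ^ 2 * cYY a b * (a / 4 / 4)

lemma cX_nonneg {a b : ℝ} (ha : 0 < a) (hb : 0 < b) : 0 ≤ cX a b := by
  have := cYY_nonneg (a := a) hb
  unfold cX; positivity

lemma vx_bound {S : Finset ℝ} {a b M : ℝ} {j : GJet} (ha : 0 < a) (hb : 0 < b)
    (hj : GSol S a b j) (hM : ∀ x y, GGood S a b x y → |j.v x y| ≤ M) (hM0 : 0 ≤ M)
    {x y : ℝ} (hx : |x| < a / 8) (hy : |y| < b / 8) (hyS : y ∉ S) : |j.vx x y| ≤ cX a b * M := by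
  have g : ∀ t, |t| < a / 4 → GGood S (a / 4) (b / 8) t y := fun t ht => ⟨ht, hy, Or.inr hyS⟩
  have g' : ∀ t, |t| < a / 4 → GGood S a b t y := fun t ht =>
    (g t ht).mono subset_rfl (by linarith) (by linarith)
  have := deriv_bound_of_second (show 0 < a / 4 by positivity)
    (fun t ht => hj.hx t y (g' t ht)) (fun t ht => hj.hxx t y (g' t ht))
    (fun t ht => hM t y (g' t ht)) (fun t ht => vxx_bound ha hb hj hM hM0 (g t ht))
    (x := x) (by linarith)
  refine this.trans_eq ?_
  unfold cX; ring

/-- Constant in the joint Lipschitz estimate. -/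
noncomputable def cAll (a b : ℝ) : ℝ :=
  cLip a b + cX a b + (a / 4) ^ 2 * cYY a b + cX (a / 2) (b / 4) * cLip a b

lemma main_lip {S : Finset ℝ} {a b M : ℝ} {j : GJet} (ha : 0 < a) (hb : 0 < b)
    (hj : GSol S a b j) (hM : ∀ x y, GGood S a b x y → |j.v x y| ≤ M) (hM0 : 0 ≤ M)
    {x y x' y' : ℝ} (hx : |x| < a / 16) (hy : |y| < b / 32) (hyS : y ∉ S)
    (hx' : |x'| < a / 16) (hy' : |y'| < b / 32) (hyS' : y' ∉ S) :
    |j.v x y - j.v x' y'| ≤ cAll a b * M * (|x - x'| + |y - y'|) ∧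
    |j.vx x y - j.vx x' y'| ≤ cAll a b * M * (|x - x'| + |y - y'|) := by
  have n1 : 0 ≤ cLip a b * M := mul_nonneg (cLip_nonneg hb) hM0
  have n2 : 0 ≤ cX a b * M := mul_nonneg (cX_nonneg ha hb) hM0
  have n3 : 0 ≤ (a / 4) ^ 2 * (cYY a b * M) :=
    mul_nonneg (sq_nonneg _) (mul_nonneg (cYY_nonneg hb) hM0)
  have n4 : 0 ≤ cX (a / 2) (b / 4) * (cLip a b * M) :=
    mul_nonneg (cX_nonneg (by positivity) (by positivity)) n1
  have hC : cAll a b * M = cLip a b * M + cX a b * M + (a / 4) ^ 2 * (cYY a b * M)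
      + cX (a / 2) (b / 4) * (cLip a b * M) := by unfold cAll; ring
  have ux := abs_nonneg (x - x')
  have uy := abs_nonneg (y - y')
  have conv : Convex ℝ {t : ℝ | |t| < a / 16} := by
    have : {t : ℝ | |t| < a / 16} = Metric.ball 0 (a / 16) := by ext t; simp
    rw [this]; exact convex_ball _ _
  have g : ∀ t, |t| < a / 16 → GGood S (a / 4) (b / 8) t y := fun t ht =>
    ⟨by linarith, by linarith, Or.inr hyS⟩
  have g' : ∀ t, |t| < a / 16 → GGood S a b t y := fun t ht =>
    (g t ht).mono subset_rfl (by linarith) (by linarith)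
  have s1 : |j.v x y - j.v x' y| ≤ cX a b * M * |x - x'| :=
    conv.norm_image_sub_le_of_norm_hasDerivWithin_le (f := fun t => j.v t y)
      (fun t ht => (hj.hx t y (g' t ht)).hasDerivWithinAt)
      (fun t ht => vx_bound ha hb hj hM hM0 (by have : |t| < a / 16 := ht; linarith) (by linarith) hyS) hx' hx
  have s2 : |j.vx x y - j.vx x' y| ≤ (a / 4) ^ 2 * (cYY a b * M) * |x - x'| :=
    conv.norm_image_sub_le_of_norm_hasDerivWithin_le (f := fun t => j.vx t y)
      (fun t ht => (hj.hxx t y (g' t ht)).hasDerivWithinAt)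
      (fun t ht => vxx_bound ha hb hj hM hM0 (g t ht)) hx' hx
  have s3 : |j.v x' y - j.v x' y'| ≤ cLip a b * M * |y - y'| :=
    lip_two ha hb hj hM hM0 (by linarith) (by linarith) (by linarith) (g' _ hx')
      ⟨by linarith, by linarith, Or.inr hyS'⟩
  have s4 : |j.vx x' y - j.vx x' y'| ≤ cX (a / 2) (b / 4) * (cLip a b * M) * |y - y'| := by
    by_cases hyy : y = y'
    · simp [hyy]
    have h0 : y - y' ≠ 0 := sub_ne_zero.2 hyy
    have hh : |y - y'| ≤ b / 4 := by
      have := abs_sub y y'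
      linarith
    have hs : GSol (sDiff (y - y') S) (a / 2) (b / 4) (j.diff (y - y')) :=
      (hj.diff (y - y') (b' := b / 4) (by linarith)).mono subset_rfl (by linarith) le_rfl
    have := vx_bound (by positivity) (by positivity) hs (diff_bound ha hb hj hM hM0 h0 hh) n1
      (x := x') (y := y') (by linarith) (by linarith)
      (by rw [mem_sDiff]; push Not; exact ⟨hyS', by simpa using hyS⟩)
    simp only [GJet.diff] at this
    rw [abs_div, div_le_iff₀ (by positivity)] at this
    simpa using this
  have m1 := mul_nonneg n1 ux
  have m2 := mul_nonneg n1 uy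
  have m3 := mul_nonneg n2 ux
  have m4 := mul_nonneg n2 uy
  have m5 := mul_nonneg n3 ux
  have m6 := mul_nonneg n3 uy
  have m7 := mul_nonneg n4 ux
  have m8 := mul_nonneg n4 uy
  rw [hC]
  constructor
  · have := abs_sub_le (j.v x y) (j.v x' y) (j.v x' y')
    linarith
  · have := abs_sub_le (j.vx x y) (j.vx x' y) (j.vx x' y')
    linarith


lemma ev_notMem_sDiff {S : Finset ℝ} {y : ℝ} (hy : y ∉ S) :
    ∀ᶠ h in nhdsWithin (0 : ℝ) {0}ᶜ, y ∉ sDiff h S := by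
  have g : GGood S 1 (|y| + 1) 0 y := ⟨by simp, by linarith, Or.inr hy⟩
  filter_upwards [g.ev_sDiff] with h hh
  exact hh.2.2.resolve_left (by simp)

/-- Constant for `y`-derivatives. -/
noncomputable def cAll2 (a b : ℝ) : ℝ := cAll (a / 2) (b / 4) * cLip a b

lemma main_lip_y {S : Finset ℝ} {a b M : ℝ} {j : GJet} (ha : 0 < a) (hb : 0 < b)
    (hj : GSol S a b j) (hM : ∀ x y, GGood S a b x y → |j.v x y| ≤ M) (hM0 : 0 ≤ M)
    {x y x' y' : ℝ} (hx : |x| < a / 32) (hy : |y| < b / 128) (hyS : y ∉ S)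
    (hx' : |x'| < a / 32) (hy' : |y'| < b / 128) (hyS' : y' ∉ S) :
    |j.vy x y - j.vy x' y'| ≤ cAll2 a b * M * (|x - x'| + |y - y'|) ∧
    ∀ w w', HasDerivAt (fun t => j.vx x t) w y → HasDerivAt (fun t => j.vx x' t) w' y' →
      |w - w'| ≤ cAll2 a b * M * (|x - x'| + |y - y'|) := by
  have key : ∀ᶠ h in nhdsWithin (0 : ℝ) {0}ᶜ,
      |(j.diff h).v x y - (j.diff h).v x' y'| ≤ cAll2 a b * M * (|x - x'| + |y - y'|) ∧
      |(j.diff h).vx x y - (j.diff h).vx x' y'| ≤ cAll2 a b * M * (|x - x'| + |y - y'|) := by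
    filter_upwards [ev_small (show 0 < b / 4 by positivity), ev_notMem_sDiff hyS,
      ev_notMem_sDiff hyS'] with h ⟨h0, hh⟩ k1 k2
    have hs : GSol (sDiff h S) (a / 2) (b / 4) (j.diff h) :=
      (hj.diff h (b' := b / 4) (by linarith)).mono subset_rfl (by linarith) le_rfl
    have := main_lip (by positivity) (by positivity) hs (diff_bound ha hb hj hM hM0 h0 hh)
      (mul_nonneg (cLip_nonneg hb) hM0) (x := x) (y := y) (x' := x') (y' := y')
      (by linarith) (by linarith) k1 (by linarith) (by linarith) k2
    rw [← mul_assoc] at this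
    exact this
  have g : GGood S a b x y := ⟨by linarith, by linarith, Or.inr hyS⟩
  have g' : GGood S a b x' y' := ⟨by linarith, by linarith, Or.inr hyS'⟩
  constructor
  · exact le_of_tendsto ((diff_tendsto (hj.hy x y g)).sub (diff_tendsto (hj.hy x' y' g'))).abs
      (key.mono fun h hh => hh.1)
  · intro w w' hw hw'
    exact le_of_tendsto ((diff_tendsto hw).sub (diff_tendsto hw')).abs
      (key.mono fun h hh => hh.2)

/-- Constant for second `y`-derivatives. -/
noncomputable def cAll3 (a b : ℝ) : ℝ := cAll2 (a / 2) (b / 4) * cLip a b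

lemma main_lip_yy {S : Finset ℝ} {a b M : ℝ} {j : GJet} (ha : 0 < a) (hb : 0 < b)
    (hj : GSol S a b j) (hM : ∀ x y, GGood S a b x y → |j.v x y| ≤ M) (hM0 : 0 ≤ M)
    {x y x' y' : ℝ} (hx : |x| < a / 64) (hy : |y| < b / 512) (hyS : y ∉ S)
    (hx' : |x'| < a / 64) (hy' : |y'| < b / 512) (hyS' : y' ∉ S) :
    |j.vyy x y - j.vyy x' y'| ≤ cAll3 a b * M * (|x - x'| + |y - y'|) := by
  have key : ∀ᶠ h in nhdsWithin (0 : ℝ) {0}ᶜ,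
      |(j.diff h).vy x y - (j.diff h).vy x' y'| ≤ cAll3 a b * M * (|x - x'| + |y - y'|) := by
    filter_upwards [ev_small (show 0 < b / 4 by positivity), ev_notMem_sDiff hyS,
      ev_notMem_sDiff hyS'] with h ⟨h0, hh⟩ k1 k2
    have hs : GSol (sDiff h S) (a / 2) (b / 4) (j.diff h) :=
      (hj.diff h (b' := b / 4) (by linarith)).mono subset_rfl (by linarith) le_rfl
    have := (main_lip_y (by positivity) (by positivity) hs (diff_bound ha hb hj hM hM0 h0 hh)
      (mul_nonneg (cLip_nonneg hb) hM0) (x := x) (y := y) (x' := x') (y' := y')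
      (by linarith) (by linarith) k1 (by linarith) (by linarith) k2).1
    rw [← mul_assoc] at this
    exact this
  have g : GGood S a b x y := ⟨by linarith, by linarith, Or.inr hyS⟩
  have g' : GGood S a b x' y' := ⟨by linarith, by linarith, Or.inr hyS'⟩
  exact le_of_tendsto ((diff_tendsto (hj.hyy x y g)).sub (diff_tendsto (hj.hyy x' y' g'))).abs key

/-- A function continuous off the origin and Lipschitz on `{y ≠ 0}` agrees near the origin, off
the origin, with a continuous function. -/
lemma lip_extend {f : ℝ → ℝ → ℝ} {a b C : ℝ}
    (hc : ∀ x y, GGood {0} a b x y → ContinuousAt (fun p : ℝ × ℝ => f p.1 p.2) (x, y))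
    (hl : ∀ x y x' y', |x| < a → |y| < b → y ≠ 0 → |x'| < a → |y'| < b → y' ≠ 0 →
      |f x y - f x' y'| ≤ C * (|x - x'| + |y - y'|)) :
    ∃ g : ℝ × ℝ → ℝ, Continuous g ∧ ∀ x y, GGood {0} a b x y → g (x, y) = f x y := by
  set s : Set (ℝ × ℝ) := {p | |p.1| < a ∧ |p.2| < b ∧ p.2 ≠ 0} with hs
  have hL : LipschitzOnWith (Real.toNNReal (2 * |C|)) (fun p : ℝ × ℝ => f p.1 p.2) s := by
    apply LipschitzOnWith.of_dist_le_mul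
    rintro ⟨x, y⟩ ⟨h1, h2, h3⟩ ⟨x', y'⟩ ⟨h1', h2', h3'⟩
    rw [Real.coe_toNNReal _ (by positivity), Real.dist_eq]
    have k := hl x y x' y' h1 h2 h3 h1' h2' h3'
    have d1 : |x - x'| ≤ dist (x, y) (x', y') := by
      rw [← Real.dist_eq, Prod.dist_eq]; exact le_max_left _ _
    have d2 : |y - y'| ≤ dist (x, y) (x', y') := by
      rw [← Real.dist_eq, Prod.dist_eq]; exact le_max_right _ _
    have hC := le_abs_self C
    have hn : 0 ≤ |x - x'| + |y - y'| := by positivity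
    calc _ ≤ C * (|x - x'| + |y - y'|) := k
      _ ≤ |C| * (|x - x'| + |y - y'|) := by gcongr
      _ ≤ |C| * (dist (x, y) (x', y') + dist (x, y) (x', y')) := by gcongr
      _ = _ := by ring
  obtain ⟨g, hg, he⟩ := hL.extend_real
  refine ⟨g, hg.continuous, fun x y gd => ?_⟩
  by_cases hy : y = 0
  · have hcy : Continuous (fun t : ℝ => (x, t)) := by fun_prop
    have t1 : Filter.Tendsto (fun t => g (x, t)) (nhdsWithin y {y}ᶜ) (nhds (g (x, y))) :=
      ((hg.continuous.comp hcy).tendsto y).mono_left nhdsWithin_le_nhds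
    have t2 : Filter.Tendsto (fun t => f x t) (nhdsWithin y {y}ᶜ) (nhds (f x y)) := by
      have : ContinuousAt (fun t => f x t) y :=
        ContinuousAt.comp (f := fun t : ℝ => (x, t)) (hc x y gd) hcy.continuousAt
      exact this.tendsto.mono_left nhdsWithin_le_nhds
    refine tendsto_nhds_unique t1 (t2.congr' ?_)
    have e1 : ∀ᶠ t in nhdsWithin y {y}ᶜ, t ≠ y := eventually_mem_nhdsWithin
    filter_upwards [e1, gd.ev_y.filter_mono nhdsWithin_le_nhds] with t ht1 ht2
    exact he (show (x, t) ∈ s from ⟨ht2.1, ht2.2.1, by rw [hy] at ht1; exact ht1⟩)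
  · exact (he (show (x, y) ∈ s from ⟨gd.1, gd.2.1, hy⟩)).symm

/-- The linear map with given partial derivatives. -/
noncomputable def gLin (α β : ℝ) : ℝ × ℝ →L[ℝ] ℝ :=
  α • ContinuousLinearMap.fst ℝ ℝ ℝ + β • ContinuousLinearMap.snd ℝ ℝ ℝ

/-- `C¹` extension across a point. -/
lemma hasFDerivAt_extend {g A B : ℝ × ℝ → ℝ} (hg : Continuous g) (hA : Continuous A)
    (hB : Continuous B) {ρ : ℝ} (hρ : 0 < ρ)
    (h : ∀ z ∈ Metric.ball (0 : ℝ × ℝ) ρ, z ≠ 0 → HasFDerivAt g (gLin (A z) (B z)) z) :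
    ∀ z ∈ Metric.ball (0 : ℝ × ℝ) ρ, HasFDerivAt g (gLin (A z) (B z)) z := by
  intro z hz
  by_cases hz0 : z ≠ 0
  · exact h z hz hz0
  push Not at hz0
  subst hz0
  have hLc : Continuous (fun z => gLin (A z) (B z)) := by unfold gLin; fun_prop
  have half : ∀ s : Set (ℝ × ℝ), Convex ℝ s → IsOpen s → (0 : ℝ × ℝ) ∉ s →
      HasFDerivWithinAt g (gLin (A 0) (B 0)) (closure (Metric.ball (0 : ℝ × ℝ) ρ ∩ s)) 0 := by
    intro s hs ho h0
    have hne : ∀ z ∈ Metric.ball (0 : ℝ × ℝ) ρ ∩ s, HasFDerivAt g (gLin (A z) (B z)) z :=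
      fun z hz => h z hz.1 (fun e => h0 (e ▸ hz.2))
    apply hasFDerivWithinAt_closure_of_tendsto_fderiv
    · exact fun z hz => (hne z hz).differentiableAt.differentiableWithinAt
    · exact (convex_ball _ _).inter hs
    · exact Metric.isOpen_ball.inter ho
    · exact fun y _ => hg.continuousWithinAt
    · refine ((hLc.tendsto 0).mono_left nhdsWithin_le_nhds).congr' ?_
      filter_upwards [self_mem_nhdsWithin] with z hz
      exact (hne z hz).fderiv.symm
  have c1 := half {z | 0 < z.1} (convex_halfSpace_gt (IsLinearMap.mk (by simp) (by simp)) 0)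
    (isOpen_lt (by fun_prop) (by fun_prop)) (by simp)
  have c2 := half {z | z.1 < 0} (convex_halfSpace_lt (IsLinearMap.mk (by simp) (by simp)) 0)
    (isOpen_lt (by fun_prop) (by fun_prop)) (by simp)
  refine (c1.union c2).hasFDerivAt ?_
  filter_upwards [Metric.isOpen_ball.mem_nhds (Metric.mem_ball_self hρ)] with z hz
  have cl : ∀ σ : ℝ, Filter.Tendsto (fun t : ℝ => (z.1 + σ * t, z.2)) (nhdsWithin 0 (Set.Ioi 0)) (nhds z) := by
    intro σ
    have : Continuous (fun t : ℝ => (z.1 + σ * t, z.2)) := by fun_prop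
    simpa using (this.tendsto 0).mono_left nhdsWithin_le_nhds
  rcases le_total 0 z.1 with hz1 | hz1
  · left
    refine mem_closure_of_tendsto (cl 1) ?_
    filter_upwards [(cl 1).eventually (Metric.isOpen_ball.mem_nhds hz), self_mem_nhdsWithin]
      with t ht1 ht2
    refine ⟨ht1, ?_⟩
    have : 0 < t := ht2
    change 0 < z.1 + 1 * t
    linarith
  · right
    refine mem_closure_of_tendsto (cl (-1)) ?_
    filter_upwards [(cl (-1)).eventually (Metric.isOpen_ball.mem_nhds hz), self_mem_nhdsWithin]
      with t ht1 ht2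
    refine ⟨ht1, ?_⟩
    have : 0 < t := ht2
    change z.1 + (-1) * t < 0
    linarith

/-- `C²` extension across a point. -/
lemma contDiffAt_extend {g gx gy gxx gxy gyy : ℝ × ℝ → ℝ} (hg : Continuous g)
    (hgx : Continuous gx) (hgy : Continuous gy) (hgxx : Continuous gxx)
    (hgxy : Continuous gxy) (hgyy : Continuous gyy) {ρ : ℝ} (hρ : 0 < ρ)
    (h : ∀ z ∈ Metric.ball (0 : ℝ × ℝ) ρ, z ≠ 0 → HasFDerivAt g (gLin (gx z) (gy z)) z)
    (hx : ∀ z ∈ Metric.ball (0 : ℝ × ℝ) ρ, z ≠ 0 → HasFDerivAt gx (gLin (gxx z) (gxy z)) z)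
    (hy : ∀ z ∈ Metric.ball (0 : ℝ × ℝ) ρ, z ≠ 0 → HasFDerivAt gy (gLin (gxy z) (gyy z)) z) :
    ContDiffAt ℝ 2 g 0 := by
  have hb : Metric.ball (0 : ℝ × ℝ) ρ ∈ nhds (0 : ℝ × ℝ) := Metric.ball_mem_nhds _ hρ
  have h' := hasFDerivAt_extend hg hgx hgy hρ h
  have hx' := hasFDerivAt_extend hgx hgxx hgxy hρ hx
  have hy' := hasFDerivAt_extend hgy hgxy hgyy hρ hy
  have c1 : ContDiffAt ℝ 1 gx 0 := by
    rw [contDiffAt_one_iff]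
    exact ⟨_, _, hb, Continuous.continuousOn (by unfold gLin; fun_prop), hx'⟩
  have c2 : ContDiffAt ℝ 1 gy 0 := by
    rw [contDiffAt_one_iff]
    exact ⟨_, _, hb, Continuous.continuousOn (by unfold gLin; fun_prop), hy'⟩
  have := contDiffAt_succ_iff_hasFDerivAt (𝕜 := ℝ) (f := g) (x := (0 : ℝ × ℝ)) (n := 1)
  rw [show (2 : WithTop ℕ∞) = ((1 : ℕ) : WithTop ℕ∞) + 1 from by norm_num]
  rw [this]
  refine ⟨fun z => gLin (gx z) (gy z), ⟨_, hb, h'⟩, ?_⟩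
  unfold gLin
  exact (c1.smul contDiffAt_const).add (c2.smul contDiffAt_const)


lemma hasFDerivAt_hx {w : ℝ × ℝ → ℝ} {L : ℝ × ℝ →L[ℝ] ℝ} {x y : ℝ} (h : HasFDerivAt w L (x, y)) :
    HasDerivAt (fun t => w (t, y)) (L (1, 0)) x :=
  HasFDerivAt.comp_hasDerivAt (f := fun t : ℝ => (t, y)) x h
    ((hasDerivAt_id x).prodMk (hasDerivAt_const x y))

lemma hasFDerivAt_hy {w : ℝ × ℝ → ℝ} {L : ℝ × ℝ →L[ℝ] ℝ} {x y : ℝ} (h : HasFDerivAt w L (x, y)) :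
    HasDerivAt (fun t => w (x, t)) (L (0, 1)) y :=
  HasFDerivAt.comp_hasDerivAt (f := fun t : ℝ => (x, t)) y h
    ((hasDerivAt_const y x).prodMk (hasDerivAt_id y))

lemma c2_first {w : ℝ × ℝ → ℝ} {z : ℝ × ℝ} (h : ContDiffAt ℝ 2 w z) :
    HasFDerivAt w (fderiv ℝ w z) z :=
  (h.differentiableAt (by norm_num)).hasFDerivAt

lemma c2_fderiv {w : ℝ × ℝ → ℝ} {z : ℝ × ℝ} (h : ContDiffAt ℝ 2 w z) :
    ContDiffAt ℝ 1 (fderiv ℝ w) z :=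
  h.fderiv_right (by norm_num)

lemma c2_second {w : ℝ × ℝ → ℝ} {z : ℝ × ℝ} (h : ContDiffAt ℝ 2 w z) (e : ℝ × ℝ) :
    HasFDerivAt (fun p => fderiv ℝ w p e) ((fderiv ℝ (fderiv ℝ w) z).flip e) z := by
  have h' := ((c2_fderiv h).differentiableAt (by norm_num)).hasFDerivAt
  have h2 := h'.clm_apply (hasFDerivAt_const e z)
  rw [ContinuousLinearMap.comp_zero, zero_add] at h2
  exact h2

lemma c2_cont {w : ℝ × ℝ → ℝ} {z : ℝ × ℝ} (h : ContDiffAt ℝ 2 w z) (e e' : ℝ × ℝ) :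
    ContinuousAt (fun p => fderiv ℝ (fderiv ℝ w) p e e') z := by
  have h1 : ContDiffAt ℝ 0 (fderiv ℝ (fderiv ℝ w)) z := (c2_fderiv h).fderiv_right (by norm_num)
  have h2 := h1.continuousAt
  fun_prop

lemma c2_ev {w : ℝ × ℝ → ℝ} {z : ℝ × ℝ} (h : ContDiffAt ℝ 2 w z) :
    ∀ᶠ p in nhds z, ContDiffAt ℝ 2 w p := h.eventually (by simp)

lemma pXX_eq {w : ℝ × ℝ → ℝ} {z : ℝ × ℝ} (h : ContDiffAt ℝ 2 w z) :
    pXX w z = fderiv ℝ (fderiv ℝ w) z (1, 0) (1, 0) := by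
  have hc : Continuous (fun t : ℝ => (t, z.2)) := by fun_prop
  have ev : ∀ᶠ t in nhds z.1, ContDiffAt ℝ 2 w (t, z.2) :=
    (hc.tendsto z.1).eventually (c2_ev h)
  have e : deriv (fun x => w (x, z.2)) =ᶠ[nhds z.1] fun t => fderiv ℝ w (t, z.2) (1, 0) :=
    ev.mono fun t ht => (hasFDerivAt_hx (c2_first ht)).deriv
  unfold pXX
  rw [e.deriv_eq]
  exact (hasFDerivAt_hx (x := z.1) (y := z.2) (c2_second h (1, 0))).deriv

lemma pYY_eq {w : ℝ × ℝ → ℝ} {z : ℝ × ℝ} (h : ContDiffAt ℝ 2 w z) :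
    pYY w z = fderiv ℝ (fderiv ℝ w) z (0, 1) (0, 1) := by
  have hc : Continuous (fun t : ℝ => (z.1, t)) := by fun_prop
  have ev : ∀ᶠ t in nhds z.2, ContDiffAt ℝ 2 w (z.1, t) :=
    (hc.tendsto z.2).eventually (c2_ev h)
  have e : deriv (fun y => w (z.1, y)) =ᶠ[nhds z.2] fun t => fderiv ℝ w (z.1, t) (0, 1) :=
    ev.mono fun t ht => (hasFDerivAt_hy (c2_first ht)).deriv
  unfold pYY
  rw [e.deriv_eq]
  exact (hasFDerivAt_hy (x := z.1) (y := z.2) (c2_second h (0, 1))).deriv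

lemma grushinLap_eq {w : ℝ × ℝ → ℝ} {z : ℝ × ℝ} (h : ContDiffAt ℝ 2 w z) :
    grushinLap w z = fderiv ℝ (fderiv ℝ w) z (1, 0) (1, 0)
      + z.1 ^ 2 * fderiv ℝ (fderiv ℝ w) z (0, 1) (0, 1) := by
  rw [grushinLap, pXX_eq h, pYY_eq h]

lemma gLin_eq (L : ℝ × ℝ →L[ℝ] ℝ) : gLin (L (1, 0)) (L (0, 1)) = L := by
  ext <;> simp [gLin]

lemma gBall_isOpen (r : ℝ) : IsOpen (gBall 0 r) := by
  have : Continuous (fun p : ℝ × ℝ => gNorm (p - 0)) := by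
    unfold gNorm
    exact Continuous.rpow_const (by fun_prop) (fun _ => Or.inr (by norm_num))
  exact isOpen_lt this continuous_const

/-- Local form: near the origin `u` agrees with a `C²` function. -/
lemma local_extension {u : ℝ × ℝ → ℝ} {η M : ℝ} (hη : 0 < η)
    (hreg : ∀ z ∈ Metric.ball (0 : ℝ × ℝ) η, z ≠ 0 → ContDiffAt ℝ 2 u z)
    (hharm : ∀ z ∈ Metric.ball (0 : ℝ × ℝ) η, z ≠ 0 → grushinLap u z = 0)
    (hbd : ∀ z ∈ Metric.ball (0 : ℝ × ℝ) η, z ≠ 0 → |u z| ≤ M) :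
    ∃ g : ℝ × ℝ → ℝ, ContDiffAt ℝ 2 g 0 ∧ ∀ᶠ z in nhds (0 : ℝ × ℝ), z ≠ 0 → g z = u z := by
  set j : GJet :=
    { v := fun x y => u (x, y)
      vx := fun x y => fderiv ℝ u (x, y) (1, 0)
      vy := fun x y => fderiv ℝ u (x, y) (0, 1)
      vxx := fun x y => fderiv ℝ (fderiv ℝ u) (x, y) (1, 0) (1, 0)
      vyy := fun x y => fderiv ℝ (fderiv ℝ u) (x, y) (0, 1) (0, 1) } with hjdef
  have hgood : ∀ x y, GGood {0} η η x y ↔ ((x, y) ∈ Metric.ball (0 : ℝ × ℝ) η ∧ (x, y) ≠ 0) := by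
    intro x y
    rw [mem_ball_zero_iff, Prod.norm_def, max_lt_iff]
    simp only [GGood, Real.norm_eq_abs, Finset.mem_singleton, ne_eq, Prod.mk_eq_zero]
    tauto
  have hC : ∀ x y, GGood {0} η η x y → ContDiffAt ℝ 2 u (x, y) := fun x y g =>
    hreg _ ((hgood x y).1 g).1 ((hgood x y).1 g).2
  have hj : GSol {0} η η j :=
    { cont := fun x y g => (hC x y g).continuousAt
      hx := fun x y g => hasFDerivAt_hx (c2_first (hC x y g))
      hy := fun x y g => hasFDerivAt_hy (c2_first (hC x y g))
      hxx := fun x y g => hasFDerivAt_hx (c2_second (hC x y g) (1, 0))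
      hyy := fun x y g => hasFDerivAt_hy (c2_second (hC x y g) (0, 1))
      eqn := fun x y g => by
        have := hharm _ ((hgood x y).1 g).1 ((hgood x y).1 g).2
        rw [grushinLap_eq (hC x y g)] at this
        exact this }
  have hM : ∀ x y, GGood {0} η η x y → |j.v x y| ≤ M := fun x y g =>
    hbd _ ((hgood x y).1 g).1 ((hgood x y).1 g).2
  have hM0 : 0 ≤ M := by
    have : GGood {0} η η 0 (η / 2) := by
      refine ⟨by simpa using hη, ?_, Or.inr ?_⟩
      · rw [abs_of_pos (by positivity)]; linarith
      · simp [hη.ne']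
    exact (abs_nonneg _).trans (hM _ _ this)
  set ρ := η / 512 with hρ
  have hρ0 : 0 < ρ := by positivity
  have mono : ∀ {x y}, GGood {0} ρ ρ x y → GGood {0} η η x y := fun g =>
    g.mono subset_rfl (by linarith) (by linarith)
  have nm : ∀ {y : ℝ}, y ≠ 0 → y ∉ ({0} : Finset ℝ) := fun h => by simpa using h
  have hp : ∀ x y, GGood {0} ρ ρ x y → ContDiffAt ℝ 1 (fderiv ℝ u) (x, y) := fun x y g =>
    c2_fderiv (hC x y (mono g))
  obtain ⟨g, cg, eg⟩ := lip_extend (f := j.v) (a := ρ) (b := ρ)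
    (fun x y g => hj.cont x y (mono g))
    (fun x y x' y' h1 h2 h3 h4 h5 h6 => (main_lip hη hη hj hM hM0 (by linarith) (by linarith)
      (nm h3) (by linarith) (by linarith) (nm h6)).1)
  obtain ⟨gx, cgx, egx⟩ := lip_extend (f := j.vx) (a := ρ) (b := ρ)
    (fun x y g => (c2_second (hC x y (mono g)) (1, 0)).continuousAt)
    (fun x y x' y' h1 h2 h3 h4 h5 h6 => (main_lip hη hη hj hM hM0 (by linarith) (by linarith)
      (nm h3) (by linarith) (by linarith) (nm h6)).2)
  obtain ⟨gy, cgy, egy⟩ := lip_extend (f := j.vy) (a := ρ) (b := ρ)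
    (fun x y g => (c2_second (hC x y (mono g)) (0, 1)).continuousAt)
    (fun x y x' y' h1 h2 h3 h4 h5 h6 => (main_lip_y hη hη hj hM hM0 (by linarith) (by linarith)
      (nm h3) (by linarith) (by linarith) (nm h6)).1)
  obtain ⟨gxy, cgxy, egxy⟩ := lip_extend
    (f := fun x y => fderiv ℝ (fderiv ℝ u) (x, y) (0, 1) (1, 0)) (a := ρ) (b := ρ)
    (fun x y g => c2_cont (hC x y (mono g)) _ _)
    (fun x y x' y' h1 h2 h3 h4 h5 h6 => (main_lip_y hη hη hj hM hM0 (by linarith) (by linarith)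
      (nm h3) (by linarith) (by linarith) (nm h6)).2 _ _
      (hasFDerivAt_hy (c2_second (hC x y ⟨by linarith, by linarith, Or.inr (nm h3)⟩) (1, 0)))
      (hasFDerivAt_hy (c2_second (hC x' y' ⟨by linarith, by linarith, Or.inr (nm h6)⟩) (1, 0))))
  obtain ⟨gyy, cgyy, egyy⟩ := lip_extend (f := j.vyy) (a := ρ) (b := ρ)
    (fun x y g => c2_cont (hC x y (mono g)) _ _)
    (fun x y x' y' h1 h2 h3 h4 h5 h6 => main_lip_yy hη hη hj hM hM0 (by linarith) (by linarith)
      (nm h3) (by linarith) (by linarith) (nm h6))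
  have hgood' : ∀ x y, GGood {0} ρ ρ x y ↔ ((x, y) ∈ Metric.ball (0 : ℝ × ℝ) ρ ∧ (x, y) ≠ 0) := by
    intro x y
    rw [mem_ball_zero_iff, Prod.norm_def, max_lt_iff]
    simp only [GGood, Real.norm_eq_abs, Finset.mem_singleton, ne_eq, Prod.mk_eq_zero]
    tauto
  have evg : ∀ x y, GGood {0} ρ ρ x y → ∀ᶠ p : ℝ × ℝ in nhds (x, y), GGood {0} ρ ρ p.1 p.2 :=
    fun x y g => (GGood.isOpen {0} ρ ρ).mem_nhds (show (x, y) ∈ _ from g)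
  refine ⟨g, contDiffAt_extend (gx := gx) (gy := gy) (gxx := fun z => -(z.1 ^ 2 * gyy z))
    (gxy := gxy) (gyy := gyy) cg cgx cgy (by fun_prop) cgxy cgyy hρ0 ?_ ?_ ?_, ?_⟩
  · rintro ⟨x, y⟩ hz hz0
    have gd := (hgood' x y).2 ⟨hz, hz0⟩
    rw [egx x y gd, egy x y gd]
    have := c2_first (hC x y (mono gd))
    rw [← gLin_eq (fderiv ℝ u (x, y))] at this
    refine this.congr_of_eventuallyEq ?_
    filter_upwards [evg x y gd] with p hp using eg _ _ hp
  · rintro ⟨x, y⟩ hz hz0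
    have gd := (hgood' x y).2 ⟨hz, hz0⟩
    have e1 : -(x ^ 2 * gyy (x, y)) = j.vxx x y := by
      rw [egyy x y gd]; linarith [hj.eqn x y (mono gd)]
    simp only [e1]
    rw [egxy x y gd]
    have := c2_second (hC x y (mono gd)) (1, 0)
    rw [← gLin_eq ((fderiv ℝ (fderiv ℝ u) (x, y)).flip (1, 0))] at this
    refine this.congr_of_eventuallyEq ?_
    filter_upwards [evg x y gd] with p hp using egx _ _ hp
  · rintro ⟨x, y⟩ hz hz0
    have gd := (hgood' x y).2 ⟨hz, hz0⟩
    rw [egxy x y gd, egyy x y gd]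
    have hsym : fderiv ℝ (fderiv ℝ u) (x, y) (0, 1) (1, 0)
        = fderiv ℝ (fderiv ℝ u) (x, y) (1, 0) (0, 1) :=
      (hC x y (mono gd)).isSymmSndFDerivAt (by simp) (0, 1) (1, 0)
    rw [hsym]
    have := c2_second (hC x y (mono gd)) (0, 1)
    rw [← gLin_eq ((fderiv ℝ (fderiv ℝ u) (x, y)).flip (0, 1))] at this
    refine this.congr_of_eventuallyEq ?_
    filter_upwards [evg x y gd] with p hp using egy _ _ hp
  · filter_upwards [Metric.ball_mem_nhds (0 : ℝ × ℝ) hρ0] with z hz hz0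
    exact eg z.1 z.2 ((hgood' z.1 z.2).2 ⟨hz, hz0⟩)

theorem grushin_removable_singularity (r : ℝ) (hr : 0 < r) (u : ℝ × ℝ → ℝ)
    (hreg : ContDiffOn ℝ 2 u (gBall 0 r \ {(0 : ℝ × ℝ)}))
    (hharm : ∀ p ∈ gBall 0 r \ {(0 : ℝ × ℝ)}, grushinLap u p = 0)
    (hbd : ∃ M : ℝ, ∀ p ∈ gBall 0 r \ {(0 : ℝ × ℝ)}, |u p| ≤ M) :
    ∃ v : ℝ × ℝ → ℝ, ContDiffOn ℝ 2 v (gBall 0 r) ∧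
      (∀ p ∈ gBall 0 r, grushinLap v p = 0) ∧
      ∀ p ∈ gBall 0 r \ {(0 : ℝ × ℝ)}, v p = u p := by
  obtain ⟨M, hM⟩ := hbd
  have ho := gBall_isOpen r
  have ho' : IsOpen (gBall 0 r \ {(0 : ℝ × ℝ)}) := ho.sdiff isClosed_singleton
  have h0 : (0 : ℝ × ℝ) ∈ gBall 0 r := by
    change gNorm (0 - 0) < r
    simp [gNorm, hr]
  have hC : ∀ z ∈ gBall 0 r, z ≠ 0 → ContDiffAt ℝ 2 u z := fun z hz hz0 =>
    hreg.contDiffAt (ho'.mem_nhds ⟨hz, hz0⟩)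
  obtain ⟨η, hη, hsub⟩ := Metric.isOpen_iff.1 ho 0 h0
  obtain ⟨g, hg, hgu⟩ := local_extension hη (fun z hz hz0 => hC z (hsub hz) hz0)
    (fun z hz hz0 => hharm z ⟨hsub hz, hz0⟩) (fun z hz hz0 => hM z ⟨hsub hz, hz0⟩)
  set v := Function.update u 0 (g 0) with hv
  have hvne : ∀ z, z ≠ 0 → v z = u z := fun z hz => Function.update_of_ne hz _ _
  have hvne' : ∀ z, z ≠ 0 → v =ᶠ[nhds z] u := fun z hz => by
    filter_upwards [isOpen_ne.mem_nhds hz] with p hp using hvne p hp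
  have hv0 : v =ᶠ[nhds 0] g := by
    filter_upwards [hgu] with z hz
    by_cases h : z = 0
    · rw [h, hv, Function.update_self]
    · rw [hvne z h, hz h]
  have hvC : ∀ z ∈ gBall 0 r, ContDiffAt ℝ 2 v z := by
    intro z hz
    by_cases h : z = 0
    · rw [h]; exact hg.congr_of_eventuallyEq hv0
    · exact (hC z hz h).congr_of_eventuallyEq (hvne' z h)
  have hlap : ∀ z ∈ gBall 0 r, z ≠ 0 → grushinLap v z = 0 := by
    intro z hz h
    rw [grushinLap_eq (hvC z hz), (hvne' z h).fderiv.fderiv_eq, ← grushinLap_eq (hC z hz h)]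
    exact hharm z ⟨hz, h⟩
  refine ⟨v, fun z hz => (hvC z hz).contDiffWithinAt, ?_, fun z hz => hvne z hz.2⟩
  intro z hz
  by_cases h : z = 0
  · subst h
    rw [grushinLap_eq (hvC 0 h0)]
    have c : ContinuousAt (fun z : ℝ × ℝ => fderiv ℝ (fderiv ℝ v) z (1, 0) (1, 0)
        + z.1 ^ 2 * fderiv ℝ (fderiv ℝ v) z (0, 1) (0, 1)) 0 := by
      have c1 := c2_cont (hvC 0 h0) (1, 0) (1, 0)
      have c2 := c2_cont (hvC 0 h0) (0, 1) (0, 1)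
      have c3 : ContinuousAt (fun z : ℝ × ℝ => z.1 ^ 2) 0 := by fun_prop
      exact c1.add (c3.mul c2)
    have t1 := c.tendsto.mono_left (nhdsWithin_le_nhds (s := {0}ᶜ))
    have t2 : Filter.Tendsto (fun _ : ℝ × ℝ => (0 : ℝ)) (nhdsWithin 0 {0}ᶜ) (nhds 0) :=
      tendsto_const_nhds
    refine tendsto_nhds_unique t1 (t2.congr' ?_)
    have e1 : ∀ᶠ z in nhdsWithin (0 : ℝ × ℝ) {0}ᶜ, z ≠ 0 := eventually_mem_nhdsWithin
    have e2 : ∀ᶠ z in nhds (0 : ℝ × ℝ), z ∈ gBall 0 r := ho.mem_nhds h0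
    filter_upwards [e1, e2.filter_mono nhdsWithin_le_nhds]
      with z hz0 hz
    rw [← grushinLap_eq (hvC z hz), hlap z hz hz0]
  · exact hlap z hz h
end

section
/- Let Ω ⊂ ℝ² be a bounded T-convex domain, f : ℝ → ℝ Lipschitz continuous, and let u ∈ C²(Ω) ∩ C(closure of Ω) solve Δ_G u + f(u) = 0 in Ω with u = ψ on ∂Ω. Assume that for any ξ₁, ξ₂ ∈ ∂Ω with ξ₂ = ξ₁ + (0, α) for some α > 0, and for each s ∈ (0, α): if ξ₁ + (0,s) ∈ Ω then ψ(ξ₁) < u(ξ₁ + (0,s)) < ψ(ξ₂), while if ξ₁ + (0,s) ∈ ∂Ω then ψ(ξ₁) < ψ(ξ₁ + (0,s)) < ψ(ξ₂). Then u is strictly monotone in the vertical direction: for every ξ ∈ ℝ² and 0 < s₁ < s₂ such that both ξ + (0, s₁) and ξ + (0, s₂) lie in Ω, one has u(ξ + (0, s₁)) < u(ξ + (0, s₂)). Moreover, u is the unique solution of the boundary value problem in C²(Ω) ∩ C(closure of Ω) satisfying the first condition above. -/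
open MeasureTheory

/-- A bounded domain `Ω ⊂ ℝ²` is `T`-convex when vertical segments joining two of its
points lie in `Ω`. -/
def TConvex (Ω : Set (ℝ × ℝ)) : Prop :=
  ∀ ξ ∈ Ω, ∀ α > (0 : ℝ), ξ + (0, α) ∈ Ω → ∀ s ∈ Set.Ioo (0 : ℝ) α, ξ + (0, s) ∈ Ω

lemma aux_second_deriv_nonneg {g : ℝ → ℝ} {x : ℝ} (hg : ContDiffAt ℝ 2 g x)
    (hm : IsLocalMin g x) : 0 ≤ deriv (deriv g) x := by
  by_contra hneg
  push Not at hneg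
  have hmax := isLocalMax_of_deriv_deriv_neg hneg hm.deriv_eq_zero hg.continuousAt
  have hc : g =ᶠ[nhds x] fun _ => g x := by
    filter_upwards [hm, hmax] with y h1 h2
    exact le_antisymm h2 h1
  have h1 := hc.deriv.deriv_eq
  simp at h1
  linarith

lemma aux_deriv_deriv_sub {g h : ℝ → ℝ} {x : ℝ} (hg : ContDiffAt ℝ 2 g x)
    (hh : ContDiffAt ℝ 2 h x) :
    deriv (deriv (fun y => g y - h y)) x = deriv (deriv g) x - deriv (deriv h) x := by
  have h2 : ∀ {k : ℝ → ℝ}, deriv (deriv k) x = iteratedDeriv 2 k x := by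
    intro k
    rw [iteratedDeriv_succ, iteratedDeriv_one]
  rw [h2, h2, h2]
  exact iteratedDeriv_fun_sub hg hh

lemma aux_exp_dd (ε k x : ℝ) :
    deriv (deriv (fun y => ε * Real.exp (k * y))) x = k ^ 2 * (ε * Real.exp (k * x)) := by
  have h : ∀ c : ℝ, deriv (fun y => c * Real.exp (k * y)) = fun y => (c * k) * Real.exp (k * y) := by
    intro c
    funext y
    have h1 : HasDerivAt (fun y => c * Real.exp (k * y)) (c * (Real.exp (k * y) * (k * 1))) y :=
      (((hasDerivAt_id' y).const_mul k).exp).const_mul c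
    rw [h1.deriv]; ring
  rw [h, h]; ring

/-- The vertical line through an interior point leaves the bounded set through its frontier. -/
lemma aux_exit {Ω : Set (ℝ × ℝ)} (hΩo : IsOpen Ω) (hΩb : Bornology.IsBounded Ω)
    {p : ℝ × ℝ} (hp : p ∈ Ω) (σ : ℝ) (hσ : σ ≠ 0) :
    ∃ t > (0 : ℝ), p + (0, σ * t) ∈ frontier Ω := by
  obtain ⟨R, hR⟩ := hΩb.subset_closedBall p
  set A : Set (ℝ × ℝ) := (fun t : ℝ => p + (0, σ * t)) '' Set.Ici 0 with hA
  have hAc : IsPreconnected A :=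
    isPreconnected_Ici.image _ (by fun_prop)
  have hpA : p ∈ A := ⟨0, by simp, by simp⟩
  have hne : A ≠ A ∩ Ω := by
    intro h
    have hσ' : 0 < |σ| := abs_pos.mpr hσ
    have hq : p + (0, σ * ((|R| + 1) / |σ|)) ∈ A :=
      ⟨(|R| + 1) / |σ|, by simp only [Set.mem_Ici]; positivity, rfl⟩
    rw [h] at hq
    have := hR hq.2
    rw [Metric.mem_closedBall, dist_eq_norm] at this
    simp only [add_sub_cancel_left] at this
    have h2 : |σ * ((|R| + 1) / |σ|)| ≤ R := by
      refine le_trans ?_ this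
      exact norm_snd_le ((0 : ℝ), σ * ((|R| + 1) / |σ|))
    rw [abs_mul, abs_div, abs_abs, mul_div_cancel₀ _ hσ'.ne', abs_of_pos (by positivity)] at h2
    linarith [le_abs_self R]
  have hfr : (A ∩ frontier Ω).Nonempty := by
    by_contra hcon
    rw [Set.not_nonempty_iff_eq_empty] at hcon
    apply hne
    refine Set.Subset.antisymm (fun q hq => ⟨hq, ?_⟩) Set.inter_subset_left
    by_contra hqΩ
    obtain ⟨z, hz, h1, h2⟩ := hAc Ω (closure Ω)ᶜ hΩo isClosed_closure.isOpen_compl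
      (by
        intro z hz
        by_cases hzΩ : z ∈ Ω
        · exact Or.inl hzΩ
        · right
          intro hzc
          have : z ∈ A ∩ frontier Ω := ⟨hz, hzc, by rwa [hΩo.interior_eq]⟩
          rw [hcon] at this; exact this)
      ⟨p, hpA, hp⟩
      ⟨q, hq, by
        intro hzc
        have : q ∈ A ∩ frontier Ω := ⟨hq, hzc, by rwa [hΩo.interior_eq]⟩
        rw [hcon] at this; exact this⟩
    exact h2 (subset_closure h1)
  obtain ⟨z, ⟨t, ht, rfl⟩, hz⟩ := hfr
  refine ⟨t, ?_, hz⟩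
  rcases (Set.mem_Ici.mp ht).lt_or_eq with h | h
  · exact h
  · exfalso
    subst h
    apply hz.2
    rw [hΩo.interior_eq]
    have e : p + ((0 : ℝ), σ * 0) = p := by ext <;> simp
    simpa only [e] using hp

lemma aux_slice_x {Ω : Set (ℝ × ℝ)} (hΩo : IsOpen Ω) {u : ℝ × ℝ → ℝ}
    (hu : ContDiffOn ℝ 2 u Ω) {p : ℝ × ℝ} (hp : p ∈ Ω) :
    ContDiffAt ℝ 2 (fun x => u (x, p.2)) p.1 := by
  have h1 : ContDiffAt ℝ 2 u (p.1, p.2) := hu.contDiffAt (hΩo.mem_nhds hp)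
  exact h1.comp p.1 (f := fun x : ℝ => (x, p.2)) (by fun_prop)

lemma aux_slice_y {Ω : Set (ℝ × ℝ)} (hΩo : IsOpen Ω) {u : ℝ × ℝ → ℝ}
    (hu : ContDiffOn ℝ 2 u Ω) {p : ℝ × ℝ} (hp : p ∈ Ω) (τ : ℝ) (hτ : p + (0, τ) ∈ Ω) :
    ContDiffAt ℝ 2 (fun y => u (p.1, y + τ)) p.2 := by
  have h1 : ContDiffAt ℝ 2 u (p.1, p.2 + τ) := by
    have := hu.contDiffAt (hΩo.mem_nhds hτ)
    convert this using 1
    ext <;> simp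
  exact h1.comp p.2 (f := fun y : ℝ => (p.1, y + τ)) (by fun_prop)

/-- Interior minimum contradiction. -/
lemma aux_min {Ω : Set (ℝ × ℝ)} (hΩo : IsOpen Ω)
    {f : ℝ → ℝ} {L : NNReal} (hf : LipschitzWith L f) {a b : ℝ × ℝ → ℝ}
    (ha : ContDiffOn ℝ 2 a Ω) (hb : ContDiffOn ℝ 2 b Ω)
    (ha_sol : ∀ p ∈ Ω, grushinLap a p + f (a p) = 0)
    (hb_sol : ∀ p ∈ Ω, grushinLap b p + f (b p) = 0)
    {τ ε : ℝ} (hε : 0 < ε) {q : ℝ × ℝ} (hq : q ∈ Ω) (hqτ : q + (0, τ) ∈ Ω)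
    (hle : a q ≤ b (q + (0, τ)))
    (hmin : IsLocalMin (fun p : ℝ × ℝ =>
      b (p + (0, τ)) - a p - ε * Real.exp ((L + 1) * p.1)) q) :
    0 < b (q + (0, τ)) - a q - ε * Real.exp ((L + 1) * q.1) := by
  have hE : 0 < ε * Real.exp ((L + 1) * q.1) := by positivity
  have hL : (0 : ℝ) ≤ L := L.2
  -- x direction
  have hx : 0 ≤ pXX b (q + (0, τ)) - pXX a q - (L + 1) ^ 2 * (ε * Real.exp ((L + 1) * q.1)) := by
    have c1 : ContDiffAt ℝ 2 (fun x => b (x, (q + (0, τ)).2)) q.1 := by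
      have := aux_slice_x hΩo hb hqτ
      simpa using this
    have c2 := aux_slice_x hΩo ha hq
    have c3 : ContDiffAt ℝ 2 (fun x => ε * Real.exp (((L : ℝ) + 1) * x)) q.1 := by fun_prop
    have hm : IsLocalMin (fun x => b (x, (q + (0, τ)).2) - a (x, q.2)
        - ε * Real.exp (((L : ℝ) + 1) * x)) q.1 := by
      have ht : Filter.Tendsto (fun x : ℝ => (x, q.2)) (nhds q.1) (nhds q) := by
        have : Continuous (fun x : ℝ => (x, q.2)) := by fun_prop
        exact this.tendsto q.1
      have := ht.eventually hmin
      filter_upwards [this] with x hx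
      have hq' : q + (0, τ) = (q.1, q.2 + τ) := by ext <;> simp
      rw [hq'] at hx
      simpa using hx
    have := aux_second_deriv_nonneg ((c1.sub c2).sub c3) hm
    rw [aux_deriv_deriv_sub (c1.sub c2) c3, aux_deriv_deriv_sub c1 c2, aux_exp_dd] at this
    simpa [pXX] using this
  have hy : 0 ≤ pYY b (q + (0, τ)) - pYY a q := by
    have c1 := aux_slice_y hΩo hb hq τ hqτ
    have c2 : ContDiffAt ℝ 2 (fun y => a (q.1, y)) q.2 := by
      have := aux_slice_y hΩo ha hq 0 (by
        have e : q + ((0 : ℝ), (0 : ℝ)) = q := by ext <;> simp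
        rwa [e])
      simpa using this
    have hm : IsLocalMin (fun y => b (q.1, y + τ) - a (q.1, y)) q.2 := by
      have ht : Filter.Tendsto (fun y : ℝ => (q.1, y)) (nhds q.2) (nhds q) := by
        have : Continuous (fun y : ℝ => (q.1, y)) := by fun_prop
        exact this.tendsto q.2
      have := ht.eventually hmin
      filter_upwards [this] with y hy
      have hq' : q + (0, τ) = (q.1, q.2 + τ) := by ext <;> simp
      rw [hq'] at hy
      simpa using hy
    have := aux_second_deriv_nonneg (c1.sub c2) hm
    rw [aux_deriv_deriv_sub c1 c2] at this
    have e : deriv (deriv (fun y => b (q.1, y + τ))) q.2 = pYY b (q + (0, τ)) := by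
      have : deriv (fun y => b (q.1, y + τ)) = fun y => deriv (fun y => b (q.1, y)) (y + τ) := by
        funext y
        exact deriv_comp_add_const (fun y => b (q.1, y)) τ y
      rw [this, deriv_comp_add_const]
      simp [pYY]
    rw [e] at this
    exact this
  have hsa := ha_sol q hq
  have hsb := hb_sol _ hqτ
  unfold grushinLap at hsa hsb
  have h1 : (q + (0, τ)).1 = q.1 := by simp
  rw [h1] at hsb
  have hlip := hf.dist_le_mul (a q) (b (q + (0, τ)))
  rw [Real.dist_eq, Real.dist_eq, abs_sub_comm (a q), abs_of_nonneg (sub_nonneg.mpr hle)] at hlip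
  have h2 := le_trans (le_abs_self _) hlip
  have h3 : 0 ≤ q.1 ^ 2 * (pYY b (q + (0, τ)) - pYY a q) := mul_nonneg (sq_nonneg _) hy
  set E := ε * Real.exp ((L + 1) * q.1)
  set w := b (q + (0, τ)) - a q
  have h4 : ((L : ℝ) + 1) ^ 2 * E ≤ L * w := by
    linarith
  by_contra hneg
  push Not at hneg
  have h5 : (L : ℝ) * w ≤ L * E := mul_le_mul_of_nonneg_left (by linarith) hL
  nlinarith [mul_nonneg hL hE.le, mul_nonneg (mul_nonneg hL hL) hE.le]

lemma aux_slide (Ω : Set (ℝ × ℝ)) (hΩo : IsOpen Ω)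
    (hΩb : Bornology.IsBounded Ω) (hΩT : TConvex Ω)
    (f : ℝ → ℝ) (L : NNReal) (hf : LipschitzWith L f)
    (ψ a b : ℝ × ℝ → ℝ)
    (ha_cont : ContinuousOn a (closure Ω)) (ha_reg : ContDiffOn ℝ 2 a Ω)
    (ha_sol : ∀ p ∈ Ω, grushinLap a p + f (a p) = 0)
    (ha_bc : ∀ p ∈ frontier Ω, a p = ψ p)
    (hb_cont : ContinuousOn b (closure Ω)) (hb_reg : ContDiffOn ℝ 2 b Ω)
    (hb_sol : ∀ p ∈ Ω, grushinLap b p + f (b p) = 0)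
    (hb_bc : ∀ p ∈ frontier Ω, b p = ψ p)
    (ha : ∀ ξ₁ ∈ frontier Ω, ∀ α > (0 : ℝ), ξ₁ + (0, α) ∈ frontier Ω →
      ∀ s ∈ Set.Ioo (0 : ℝ) α, ξ₁ + (0, s) ∈ Ω →
          ψ ξ₁ < a (ξ₁ + (0, s)) ∧ a (ξ₁ + (0, s)) < ψ (ξ₁ + (0, α)))
    (hb : ∀ ξ₁ ∈ frontier Ω, ∀ α > (0 : ℝ), ξ₁ + (0, α) ∈ frontier Ω →
      ∀ s ∈ Set.Ioo (0 : ℝ) α, ξ₁ + (0, s) ∈ Ω →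
          ψ ξ₁ < b (ξ₁ + (0, s)) ∧ b (ξ₁ + (0, s)) < ψ (ξ₁ + (0, α)))
    (hψ : ∀ ξ₁ ∈ frontier Ω, ∀ α > (0 : ℝ), ξ₁ + (0, α) ∈ frontier Ω →
      ∀ s ∈ Set.Ioo (0 : ℝ) α, ξ₁ + (0, s) ∈ frontier Ω →
          ψ ξ₁ < ψ (ξ₁ + (0, s)) ∧ ψ (ξ₁ + (0, s)) < ψ (ξ₁ + (0, α)))
    (ξ : ℝ × ℝ) (τ : ℝ) (hτ : 0 < τ) (hξ : ξ ∈ Ω) (hξτ : ξ + (0, τ) ∈ Ω) :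
    a ξ < b (ξ + (0, τ)) := by
  have hfront : ∀ p ∈ closure Ω, p ∉ Ω → p ∈ frontier Ω := by
    intro p hp hp'
    exact ⟨hp, by rwa [hΩo.interior_eq]⟩
  have hstrict : ∀ (ξ : ℝ × ℝ) (τ : ℝ), 0 < τ → ξ ∈ closure Ω → ξ + (0, τ / 2) ∈ closure Ω →
      ξ + (0, τ) ∈ closure Ω → ¬ (ξ ∈ Ω ∧ ξ + (0, τ) ∈ Ω) → a ξ < b (ξ + (0, τ)) := by
    intro ξ τ hτ h0 hm h1 hnot
    by_cases c0 : ξ ∈ Ω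
    · have c1 : ξ + (0, τ) ∉ Ω := fun h => hnot ⟨c0, h⟩
      have f1 := hfront _ h1 c1
      obtain ⟨t, ht, hex⟩ := aux_exit hΩo hΩb c0 (-1) (by norm_num)
      have e1 : ξ + (0, -1 * t) + (0, t + τ) = ξ + (0, τ) := by
        ext <;> simp
      have e2 : ξ + (0, -1 * t) + (0, t) = ξ := by
        ext <;> simp
      have := (ha _ hex (t + τ) (by positivity) (by rw [e1]; exact f1) t ⟨ht, by linarith⟩
        (by rw [e2]; exact c0)).2
      rw [e1, e2] at this
      rw [hb_bc _ f1]
      exact this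
    · have f0 := hfront _ h0 c0
      rw [ha_bc _ f0]
      by_cases c1 : ξ + (0, τ) ∈ Ω
      · obtain ⟨t, ht, hex⟩ := aux_exit hΩo hΩb c1 1 (by norm_num)
        have e1 : ξ + (0, τ) + (0, 1 * t) = ξ + (0, τ + t) := by
          ext <;> simp [add_assoc]
        rw [e1] at hex
        exact (hb _ f0 (τ + t) (by positivity) hex τ ⟨hτ, by linarith⟩ c1).1
      · have f1 := hfront _ h1 c1
        rw [hb_bc _ f1]
        have hs : τ / 2 ∈ Set.Ioo (0 : ℝ) τ := ⟨by linarith, by linarith⟩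
        by_cases cm : ξ + (0, τ / 2) ∈ Ω
        · have := hb _ f0 τ hτ f1 _ hs cm
          exact this.1.trans this.2
        · have := hψ _ f0 τ hτ f1 _ hs (hfront _ hm cm)
          exact this.1.trans this.2
  by_contra hbad
  push Not at hbad
  have hKc : IsCompact (closure Ω) := hΩb.isCompact_closure
  obtain ⟨R, hR⟩ := Metric.isBounded_iff.mp hΩb.closure
  have hmid : ∀ (ξ : ℝ × ℝ) (τ : ℝ), 0 < τ → ξ ∈ Ω → ξ + (0, τ) ∈ Ω → ξ + (0, τ / 2) ∈ Ω :=
    fun ξ τ hτ h h' => hΩT ξ h τ hτ h' (τ / 2) ⟨by linarith, by linarith⟩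
  have htauR : ∀ (ξ : ℝ × ℝ) (τ : ℝ), ξ ∈ closure Ω → ξ + (0, τ) ∈ closure Ω → τ ≤ R := by
    intro ξ τ h h'
    have := hR h' h
    rw [dist_eq_norm, add_sub_cancel_left] at this
    exact (le_abs_self τ).trans ((norm_snd_le ((0 : ℝ), τ)).trans this)
  -- the compact set of bad pairs
  let T : Set ((ℝ × ℝ) × ℝ) := ((closure Ω) ×ˢ Set.Icc τ R) ∩
    ((fun z => z.1 + (0, z.2 / 2)) ⁻¹' closure Ω ∩ (fun z => z.1 + (0, z.2)) ⁻¹' closure Ω)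
  have hTc : IsCompact T := by
    apply (hKc.prod isCompact_Icc).inter_right
    exact (isClosed_closure.preimage (by fun_prop)).inter (isClosed_closure.preimage (by fun_prop))
  let C : Set ((ℝ × ℝ) × ℝ) := {z ∈ T | b (z.1 + (0, z.2)) ≤ a z.1}
  have hCc : IsCompact C := by
    refine hTc.of_isClosed_subset ?_ (fun z hz => hz.1)
    refine hTc.isClosed.isClosed_le ?_ ?_
    · exact hb_cont.comp (f := fun z : (ℝ × ℝ) × ℝ => z.1 + (0, z.2)) (by fun_prop)
        (fun z hz => hz.2.2)
    · exact ha_cont.comp (by fun_prop) (fun z hz => hz.1.1)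
  have hCne : C.Nonempty := ⟨(ξ, τ), ⟨⟨⟨subset_closure hξ,
    ⟨le_rfl, htauR _ _ (subset_closure hξ) (subset_closure hξτ)⟩⟩,
    ⟨subset_closure (hmid _ _ hτ hξ hξτ), subset_closure hξτ⟩⟩, hbad⟩⟩
  obtain ⟨⟨ξ₀, t⟩, hzC, hzmax⟩ := hCc.exists_isMaxOn hCne (f := fun z => z.2) (by fun_prop)
  have htτ : τ ≤ t := hzC.1.1.2.1
  have ht0 : 0 < t := hτ.trans_le htτ
  have hbad0 : b (ξ₀ + (0, t)) ≤ a ξ₀ := hzC.2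
  have hin : ξ₀ ∈ Ω ∧ ξ₀ + (0, t) ∈ Ω := by
    by_contra h
    exact absurd (hstrict ξ₀ t ht0 hzC.1.1.1 hzC.1.2.1 hzC.1.2.2 h) (not_lt.mpr hbad0)
  have hgt : ∀ (p : ℝ × ℝ) (s : ℝ), t < s → p ∈ Ω → p + (0, s) ∈ Ω → a p < b (p + (0, s)) := by
    intro p s hs hp hps
    by_contra hcon
    push Not at hcon
    have : ((p, s) : (ℝ × ℝ) × ℝ) ∈ C := ⟨⟨⟨subset_closure hp,
      ⟨htτ.trans hs.le, htauR _ _ (subset_closure hp) (subset_closure hps)⟩⟩,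
      ⟨subset_closure (hmid _ _ (ht0.trans hs) hp hps), subset_closure hps⟩⟩, hcon⟩
    have := hzmax this
    simp at this
    linarith
  let D : Set (ℝ × ℝ) := Ω ∩ (fun p => p + (0, t)) ⁻¹' Ω
  have hDo : IsOpen D := hΩo.inter (hΩo.preimage (by fun_prop))
  have hge : ∀ p ∈ D, a p ≤ b (p + (0, t)) := by
    rintro p ⟨hp, hpt⟩
    have hbc : ContinuousAt b (p + (0, t)) := hb_reg.continuousOn.continuousAt (hΩo.mem_nhds hpt)
    have hsh : Filter.Tendsto (fun s : ℝ => p + (0, s)) (nhdsWithin t (Set.Ioi t))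
        (nhds (p + (0, t))) := by
      have : Continuous (fun s : ℝ => p + (0, s)) := by fun_prop
      exact (this.tendsto t).mono_left nhdsWithin_le_nhds
    refine ge_of_tendsto (hbc.tendsto.comp hsh) ?_
    filter_upwards [hsh.eventually (hΩo.mem_nhds hpt), self_mem_nhdsWithin] with s h1 h2
    exact (hgt p s h2 hp h1).le
  have hDK : closure D ⊆ closure Ω := closure_mono Set.inter_subset_left
  have hDshift : ∀ c : ℝ, (∀ p ∈ D, p + (0, c) ∈ Ω) → ∀ p ∈ closure D, p + (0, c) ∈ closure Ω := by
    intro c hc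
    exact Set.MapsTo.closure (f := fun p : ℝ × ℝ => p + (0, c)) hc (by fun_prop)
  have hDt := hDshift t (fun p hp => hp.2)
  have hDm := hDshift (t / 2) (fun p hp => hmid p t ht0 hp.1 hp.2)
  have hDc : IsCompact (closure D) := hKc.of_isClosed_subset isClosed_closure hDK
  have hwc : ContinuousOn (fun p => b (p + (0, t)) - a p) (closure D) := by
    refine ContinuousOn.sub ?_ (ha_cont.mono hDK)
    exact hb_cont.comp (f := fun p : ℝ × ℝ => p + (0, t)) (by fun_prop) hDt
  have hFc : IsCompact (closure D \ D) := hDc.diff hDo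
  obtain ⟨ε, hε, hεF⟩ := hFc.exists_forall_le' (a := (0 : ℝ))
    (f := fun p => (b (p + (0, t)) - a p) * Real.exp (-(((L : ℝ) + 1) * p.1)))
    ((hwc.mono Set.diff_subset).mul (by fun_prop)) (by
      intro p hp
      have := hstrict p t ht0 (hDK hp.1) (hDm p hp.1) (hDt p hp.1) (fun h => hp.2 h)
      exact mul_pos (sub_pos.mpr this) (Real.exp_pos _))
  obtain ⟨q, hqD, hqmin⟩ := hDc.exists_isMinOn ⟨ξ₀, subset_closure hin⟩
    (f := fun p => b (p + (0, t)) - a p - ε * Real.exp ((L + 1) * p.1))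
    (hwc.sub (by fun_prop))
  have hq0 : b (q + (0, t)) - a q - ε * Real.exp ((L + 1) * q.1) < 0 := by
    have h1 := hqmin (subset_closure hin : ξ₀ ∈ closure D)
    simp only [Set.mem_setOf_eq] at h1
    have h2 : 0 < ε * Real.exp ((L + 1) * ξ₀.1) := by positivity
    linarith
  have hqin : q ∈ D := by
    by_contra hq
    have h1 := hεF q ⟨hqD, hq⟩
    simp only [Real.exp_neg] at h1
    rw [← div_eq_mul_inv, le_div_iff₀ (Real.exp_pos _)] at h1
    linarith
  have hloc := hqmin.isLocalMin (Filter.mem_of_superset (hDo.mem_nhds hqin) subset_closure)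
  have := aux_min hΩo hf ha_reg hb_reg ha_sol hb_sol hε hqin.1 hqin.2 (hge q hqin) hloc
  linarith

/-- the sliding-method monotonicity theorem (Theorem 5.1 of the paper).
On a bounded `T`-convex domain, a solution of `Δ_G u + f(u) = 0` with boundary datum
`ψ` satisfying the ordering conditions along vertical segments is strictly increasing in
the vertical direction, and is the unique such solution. -/
theorem sliding_monotonicity (Ω : Set (ℝ × ℝ)) (hΩo : IsOpen Ω) (hΩc : IsConnected Ω)
    (hΩb : Bornology.IsBounded Ω) (hΩT : TConvex Ω)
    (f : ℝ → ℝ) (L : NNReal) (hf : LipschitzWith L f)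
    (ψ : ℝ × ℝ → ℝ) (u : ℝ × ℝ → ℝ)
    (hu_cont : ContinuousOn u (closure Ω)) (hu_reg : ContDiffOn ℝ 2 u Ω)
    (hu_sol : ∀ p ∈ Ω, grushinLap u p + f (u p) = 0)
    (hu_bc : ∀ p ∈ frontier Ω, u p = ψ p)
    (hord : ∀ ξ₁ ∈ frontier Ω, ∀ α > (0 : ℝ), ξ₁ + (0, α) ∈ frontier Ω →
      ∀ s ∈ Set.Ioo (0 : ℝ) α,
        (ξ₁ + (0, s) ∈ Ω →
          ψ ξ₁ < u (ξ₁ + (0, s)) ∧ u (ξ₁ + (0, s)) < ψ (ξ₁ + (0, α))) ∧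
        (ξ₁ + (0, s) ∈ frontier Ω →
          ψ ξ₁ < ψ (ξ₁ + (0, s)) ∧ ψ (ξ₁ + (0, s)) < ψ (ξ₁ + (0, α)))) :
    (∀ (ξ : ℝ × ℝ) (s₁ s₂ : ℝ), 0 < s₁ → s₁ < s₂ →
        ξ + (0, s₁) ∈ Ω → ξ + (0, s₂) ∈ Ω →
        u (ξ + (0, s₁)) < u (ξ + (0, s₂))) ∧
    (∀ v : ℝ × ℝ → ℝ, ContinuousOn v (closure Ω) → ContDiffOn ℝ 2 v Ω →
        (∀ p ∈ Ω, grushinLap v p + f (v p) = 0) →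
        (∀ p ∈ frontier Ω, v p = ψ p) →
        (∀ ξ₁ ∈ frontier Ω, ∀ α > (0 : ℝ), ξ₁ + (0, α) ∈ frontier Ω →
          ∀ s ∈ Set.Ioo (0 : ℝ) α, ξ₁ + (0, s) ∈ Ω →
            ψ ξ₁ < v (ξ₁ + (0, s)) ∧ v (ξ₁ + (0, s)) < ψ (ξ₁ + (0, α))) →
        ∀ p ∈ closure Ω, v p = u p) := by
  have H1 : ∀ ξ₁ ∈ frontier Ω, ∀ α > (0 : ℝ), ξ₁ + (0, α) ∈ frontier Ω →
      ∀ s ∈ Set.Ioo (0 : ℝ) α, ξ₁ + (0, s) ∈ Ω →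
          ψ ξ₁ < u (ξ₁ + (0, s)) ∧ u (ξ₁ + (0, s)) < ψ (ξ₁ + (0, α)) :=
    fun ξ₁ h α hα h' s hs => (hord ξ₁ h α hα h' s hs).1
  have H2 : ∀ ξ₁ ∈ frontier Ω, ∀ α > (0 : ℝ), ξ₁ + (0, α) ∈ frontier Ω →
      ∀ s ∈ Set.Ioo (0 : ℝ) α, ξ₁ + (0, s) ∈ frontier Ω →
          ψ ξ₁ < ψ (ξ₁ + (0, s)) ∧ ψ (ξ₁ + (0, s)) < ψ (ξ₁ + (0, α)) :=
    fun ξ₁ h α hα h' s hs => (hord ξ₁ h α hα h' s hs).2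
  have hlim : ∀ a b : ℝ × ℝ → ℝ, ContDiffOn ℝ 2 b Ω →
      (∀ (p : ℝ × ℝ) (τ : ℝ), 0 < τ → p ∈ Ω → p + (0, τ) ∈ Ω → a p < b (p + (0, τ))) →
      ∀ p ∈ Ω, a p ≤ b p := by
    intro a b hb h p hp
    have hbc : ContinuousAt b p := hb.continuousOn.continuousAt (hΩo.mem_nhds hp)
    have hsh : Filter.Tendsto (fun s : ℝ => p + (0, s)) (nhdsWithin 0 (Set.Ioi 0)) (nhds p) := by
      have hc : Continuous (fun s : ℝ => p + (0, s)) := by fun_prop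
      have := (hc.tendsto 0).mono_left (nhdsWithin_le_nhds (s := Set.Ioi 0))
      have e : p + ((0 : ℝ), (0 : ℝ)) = p := by ext <;> simp
      rwa [e] at this
    refine ge_of_tendsto (hbc.tendsto.comp hsh) ?_
    filter_upwards [hsh.eventually (hΩo.mem_nhds hp), self_mem_nhdsWithin] with s h1 h2
    exact (h p s h2 hp h1).le
  constructor
  · intro ξ s₁ s₂ _ h12 h1 h2
    have e : ξ + (0, s₂) = ξ + (0, s₁) + (0, s₂ - s₁) := by
      ext <;> simp [add_assoc]
    rw [e] at h2 ⊢
    exact aux_slide Ω hΩo hΩb hΩT f L hf ψ u u hu_cont hu_reg hu_sol hu_bc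
      hu_cont hu_reg hu_sol hu_bc H1 H1 H2 _ _ (sub_pos.mpr h12) h1 h2
  · intro v hv_cont hv_reg hv_sol hv_bc hv p hp
    by_cases hpΩ : p ∈ Ω
    · apply le_antisymm
      · exact hlim v u hu_reg (aux_slide Ω hΩo hΩb hΩT f L hf ψ v u hv_cont hv_reg hv_sol hv_bc
          hu_cont hu_reg hu_sol hu_bc hv H1 H2) p hpΩ
      · exact hlim u v hv_reg (aux_slide Ω hΩo hΩb hΩT f L hf ψ u v hu_cont hu_reg hu_sol hu_bc
          hv_cont hv_reg hv_sol hv_bc H1 hv H2) p hpΩ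
    · have hpf : p ∈ frontier Ω := ⟨hp, by rwa [hΩo.interior_eq]⟩
      rw [hv_bc p hpf, hu_bc p hpf]
end
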